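/- arXiv:2211.03273 — 10 statements merged into one kernel-verified Lean document; each statement's English description precedes it below -/
import Mathlib

section
/- Let (W, δ, h) be a contraction over R, set ϖ := id_W − δ∘h − h∘δ, let V := range(ϖ) (a submodule of W), let τ : V → W be the inclusion, and let σ : W → V be the corestriction of ϖ (so τ∘σ = ϖ as an endomorphism of W). Then: (i) V is invariant under δ, so δ restricts to a differential d := δ|_V on V with d∘d = 0; (ii) σ∘τ = id_V; (iii) id_W − τ∘σ = h∘δ + δ∘h; (iv) σ∘h = 0; (v) h∘τ = 0; (vi) τ and σ are cochain maps, i.e., δ∘τ = τ∘d and d∘σ = σ∘δ. In other words, (V, d) together with τ, σ, h forms a contraction data in the classical sense. -/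
/-!
Everything follows from four identities in the ring `Module.End R W`, with
`ϖ = 1 - δ h - h δ`. Since `δ² = 0`, both `ϖ δ` and `δ ϖ` equal `δ - δ h δ`; since `h² = 0`
and `h δ h = h`, both `ϖ h` and `h ϖ` vanish. Hence
`ϖ² = ϖ - ϖ δ h - ϖ h δ = ϖ - δ ϖ h = ϖ`, so `ϖ` is a projection commuting with `δ`. It therefore
acts as the identity on its range, its range is `δ`-invariant, and the compression `σ δ τ` is the
restriction of `δ`.
-/

/-- A contraction `(W, δ, h)` over `R` induces a classical contraction data:
with `ϖ := id − δ∘h − h∘δ`, `V := range ϖ`, `τ : V → W` the inclusion and `σ : W → V` the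
corestriction of `ϖ` (so `τ∘σ = ϖ`), the submodule `V` is `δ`-invariant with induced
differential `d := δ|_V` (characterized by `δ∘τ = τ∘d`), `d∘d = 0`, `σ∘τ = id_V`,
`id_W − τ∘σ = h∘δ + δ∘h`, `σ∘h = 0`, `h∘τ = 0`, and `τ`, `σ` are cochain maps. -/
theorem contraction_data_from_contraction {R W : Type*} [CommRing R] [AddCommGroup W]
    [Module R W] (δ h : Module.End R W)
    (hδδ : δ * δ = 0) (hhh : h * h = 0) (hhδh : h * δ * h = h) :
    let ϖ : Module.End R W := 1 - δ * h - h * δ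
    let V : Submodule R W := LinearMap.range ϖ
    let τ : V →ₗ[R] W := V.subtype
    let σ : W →ₗ[R] V := LinearMap.codRestrict V ϖ fun x => LinearMap.mem_range_self ϖ x
    let d : V →ₗ[R] V := σ ∘ₗ δ ∘ₗ τ
    τ ∘ₗ σ = ϖ ∧
    (δ ∘ₗ τ = τ ∘ₗ d ∧ d ∘ₗ d = 0) ∧
    σ ∘ₗ τ = LinearMap.id ∧
    LinearMap.id - τ ∘ₗ σ = h * δ + δ * h ∧
    σ ∘ₗ h = 0 ∧
    h ∘ₗ τ = 0 ∧
    (δ ∘ₗ τ = τ ∘ₗ d ∧ d ∘ₗ σ = σ ∘ₗ δ) := by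
  intro ϖ V τ σ d
  have h_comm : ϖ * δ = δ * ϖ := by
    simp only [ϖ, sub_mul, mul_sub, one_mul, mul_one, mul_assoc, hδδ, mul_zero, sub_zero]
    rw [← mul_assoc δ δ h, hδδ, zero_mul, sub_zero]
  have h_left : ϖ * h = 0 := by
    simp only [ϖ, sub_mul, one_mul, hhδh]
    rw [mul_assoc, hhh, mul_zero, sub_zero, sub_self]
  have h_right : h * ϖ = 0 := by
    simp only [ϖ, mul_sub, mul_one, ← mul_assoc, hhδh, hhh, zero_mul, sub_self]
  have h_idem : ϖ * ϖ = ϖ := by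
    calc ϖ * ϖ = ϖ * (1 - δ * h - h * δ) := rfl
      _ = ϖ := by
        rw [mul_sub, mul_sub, mul_one, ← mul_assoc, ← mul_assoc, h_comm, mul_assoc, h_left,
          mul_zero, zero_mul, sub_zero, sub_zero]
  have e_comm (x : W) : ϖ (δ x) = δ (ϖ x) := LinearMap.congr_fun h_comm x
  have e_δδ (x : W) : δ (δ x) = 0 := LinearMap.congr_fun hδδ x
  have e_τσ (x : W) : τ (σ x) = ϖ x := rfl
  have e_fix (v : V) : ϖ (τ v) = τ v := by
    obtain ⟨_, w, rfl⟩ := v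
    exact LinearMap.congr_fun h_idem w
  have e_τd (v : V) : τ (d v) = δ (τ v) := by
    change ϖ (δ (τ v)) = δ (τ v)
    rw [e_comm, e_fix]
  have τ_inj : Function.Injective τ := V.subtype_injective
  have h_τ : δ ∘ₗ τ = τ ∘ₗ d := LinearMap.ext fun v => (e_τd v).symm
  refine ⟨rfl, ⟨h_τ, ?_⟩, ?_, ?_, ?_, ?_, h_τ, ?_⟩
  · ext1 v
    apply τ_inj
    rw [LinearMap.comp_apply, e_τd, e_τd, e_δδ, LinearMap.zero_apply, map_zero]
  · ext1 v
    exact τ_inj (e_fix v)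
  · change 1 - ϖ = h * δ + δ * h
    simp only [ϖ]
    abel
  · ext1 x
    exact τ_inj (LinearMap.congr_fun h_left x)
  · ext1 v
    rw [LinearMap.comp_apply, ← e_fix v]
    exact LinearMap.congr_fun h_right (τ v)
  · ext1 x
    apply τ_inj
    exact (e_τd (σ x)).trans (e_comm x).symm
end

section
/- (Homological perturbation lemma, algebraic core.) Let (W, δ, h) be a contraction over R, let ∂ : W →ₗ[R] W be a perturbation (i.e., (δ+∂)∘(δ+∂) = 0), and assume id_W + h∘∂ and id_W + ∂∘h are invertible endomorphisms of W. Set h_∂ := (id_W + h∘∂)⁻¹ ∘ h. Then h_∂ ∘ h_∂ = 0 and h_∂ ∘ (δ+∂) ∘ h_∂ = h_∂; that is, (W, δ+∂, h_∂) is again a contraction over R. -/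
/-!
Put `u = 1 + h∘∂` and `v = 1 + ∂∘h`. Since `u∘h = h + h∘∂∘h = h∘v`, the perturbed homotopy has the
two expressions `u⁻¹∘h = h∘v⁻¹`. Writing the left factor `h_∂` as `u⁻¹∘h` and the right one as
`h∘v⁻¹` reduces both identities to `h∘h = 0` and `h∘(δ+∂)∘h = h + h∘∂∘h = u∘h`.
-/

/-- Homological perturbation lemma, algebraic core: if `(W, δ, h)` is a
contraction over `R`, `∂` is a perturbation (`(δ+∂)∘(δ+∂) = 0`), and `id + h∘∂`,
`id + ∂∘h` are invertible, then `(W, δ+∂, h_∂)` with `h_∂ := (id + h∘∂)⁻¹ ∘ h`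
is again a contraction: `h_∂∘h_∂ = 0` and `h_∂∘(δ+∂)∘h_∂ = h_∂`. -/
theorem homological_perturbation_core {R W : Type*} [CommRing R] [AddCommGroup W]
    [Module R W] (δ h pe : Module.End R W)
    (hδδ : δ * δ = 0) (hhh : h * h = 0) (hhδh : h * δ * h = h)
    (hpert : (δ + pe) * (δ + pe) = 0)
    (hu : IsUnit (1 + h * pe)) (hv : IsUnit (1 + pe * h)) :
    let hp : Module.End R W := ↑hu.unit⁻¹ * h
    hp * hp = 0 ∧ hp * (δ + pe) * hp = hp := by
  intro hp
  obtain ⟨v, hv⟩ := hv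
  have hu_inv : (↑hu.unit⁻¹ : Module.End R W) * (1 + h * pe) = 1 := hu.val_inv_mul
  have hp_eq : hp = h * ↑v⁻¹ := by
    rw [Units.eq_mul_inv_iff_mul_eq, hv]
    calc ↑hu.unit⁻¹ * h * (1 + pe * h)
        = (↑hu.unit⁻¹ * (1 + h * pe)) * h := by noncomm_ring
      _ = h := by rw [hu_inv, one_mul]
  have key : h * (δ + pe) * h = (1 + h * pe) * h := by
    rw [mul_add, add_mul, add_mul, hhδh, one_mul]
  constructor
  · calc hp * hp = ↑hu.unit⁻¹ * h * (h * ↑v⁻¹) := congrArg (hp * ·) hp_eq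
      _ = ↑hu.unit⁻¹ * (h * h) * ↑v⁻¹ := by simp only [mul_assoc]
      _ = 0 := by rw [hhh, mul_zero, zero_mul]
  · calc hp * (δ + pe) * hp
        = ↑hu.unit⁻¹ * h * (δ + pe) * (h * ↑v⁻¹) := congrArg (hp * (δ + pe) * ·) hp_eq
      _ = ↑hu.unit⁻¹ * (h * (δ + pe) * h) * ↑v⁻¹ := by simp only [mul_assoc]
      _ = (↑hu.unit⁻¹ * (1 + h * pe)) * h * ↑v⁻¹ := by rw [key]; simp only [mul_assoc]
      _ = hp := by rw [hu_inv, one_mul, hp_eq]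
end

section
/- Let (W, δ, h) be a contraction over R, ∂ a perturbation with id_W + h∘∂ and id_W + ∂∘h invertible, h_∂ := (id_W + h∘∂)⁻¹ ∘ h, ϖ := id_W − δ∘h − h∘δ, and ϖ_∂ := id_W − (δ+∂)∘h_∂ − h_∂∘(δ+∂). Then the following factorization identities hold: (i) (id_W − h∘δ) ∘ (id_W − δ∘h) = ϖ; (ii) (id_W − h_∂∘(δ+∂)) ∘ (id_W − (δ+∂)∘h_∂) = ϖ_∂; (iii) id_W − (δ+∂)∘h_∂ = (id_W − δ∘h) ∘ (id_W + ∂∘h)⁻¹; (iv) id_W − h_∂∘(δ+∂) = (id_W + h∘∂)⁻¹ ∘ (id_W − h∘δ). -/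
/-!
All four identities hold in any ring. Expanding `(1 - x * d) * (1 - d * x)` leaves
`1 - d * x - x * d` plus the term `x * d * d * x`, which vanishes when `d * d = 0`; this gives the
two factorizations, for `d = δ` and for `d = δ + ∂`. For the remaining two identities, write
`a = (1 + h∂)⁻¹` and `b = (1 + ∂h)⁻¹`. Since `h (1 + ∂h) = (1 + h∂) h`, we have `a h = h b`, so
`1 = (1 + ∂h) b` gives `1 - (δ + ∂) h b = (1 - δh) b`, and `1 = a (1 + h∂)` gives
`1 - a h (δ + ∂) = a (1 - hδ)`.
-/

theorem one_sub_mul_one_sub_of_sq_zero {A : Type*} [Ring A] (d x : A) (hd : d * d = 0) :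
    (1 - x * d) * (1 - d * x) = 1 - d * x - x * d := by
  have h0 : x * d * (d * x) = 0 := by
    rw [mul_assoc, ← mul_assoc d d x, hd, zero_mul, mul_zero]
  rw [mul_sub, sub_mul, sub_mul, h0]
  simp only [mul_one, one_mul, sub_zero]
  abel

/-- factorization identities for the perturbed projection operator.
With `h_∂ := (id + h∘∂)⁻¹ ∘ h`, `ϖ := id − δ∘h − h∘δ` and
`ϖ_∂ := id − (δ+∂)∘h_∂ − h_∂∘(δ+∂)`:
(i) `(id − h∘δ)∘(id − δ∘h) = ϖ`;
(ii) `(id − h_∂∘(δ+∂))∘(id − (δ+∂)∘h_∂) = ϖ_∂`;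
(iii) `id − (δ+∂)∘h_∂ = (id − δ∘h)∘(id + ∂∘h)⁻¹`;
(iv) `id − h_∂∘(δ+∂) = (id + h∘∂)⁻¹∘(id − h∘δ)`. -/
theorem perturbation_factorization_identities {R W : Type*} [CommRing R] [AddCommGroup W]
    [Module R W] (δ h pe : Module.End R W)
    (hδδ : δ * δ = 0) (hhh : h * h = 0) (hhδh : h * δ * h = h)
    (hpert : (δ + pe) * (δ + pe) = 0)
    (hu : IsUnit (1 + h * pe)) (hv : IsUnit (1 + pe * h)) :
    let hp : Module.End R W := ↑hu.unit⁻¹ * h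
    let ϖ : Module.End R W := 1 - δ * h - h * δ
    let ϖp : Module.End R W := 1 - (δ + pe) * hp - hp * (δ + pe)
    (1 - h * δ) * (1 - δ * h) = ϖ ∧
    (1 - hp * (δ + pe)) * (1 - (δ + pe) * hp) = ϖp ∧
    1 - (δ + pe) * hp = (1 - δ * h) * ↑hv.unit⁻¹ ∧
    1 - hp * (δ + pe) = ↑hu.unit⁻¹ * (1 - h * δ) := by
  intro hp ϖ ϖp
  have ha : (↑hu.unit⁻¹ : Module.End R W) * (1 + h * pe) = 1 := hu.val_inv_mul
  have hb : (1 + pe * h) * (↑hv.unit⁻¹ : Module.End R W) = 1 := hv.mul_val_inv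
  -- The perturbed homotopy is also `h ∘ (id + ∂∘h)⁻¹`.
  have hcomm : hp = h * (↑hv.unit⁻¹ : Module.End R W) := by
    calc hp = ↑hu.unit⁻¹ * h * ((1 + pe * h) * ↑hv.unit⁻¹) := by rw [hb, mul_one]
      _ = (↑hu.unit⁻¹ * (1 + h * pe)) * (h * ↑hv.unit⁻¹) := by noncomm_ring
      _ = h * ↑hv.unit⁻¹ := by rw [ha, one_mul]
  refine ⟨one_sub_mul_one_sub_of_sq_zero δ h hδδ,
    one_sub_mul_one_sub_of_sq_zero (δ + pe) hp hpert, ?_, ?_⟩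
  · rw [hcomm]
    calc 1 - (δ + pe) * (h * ↑hv.unit⁻¹)
        = (1 + pe * h) * ↑hv.unit⁻¹ - (δ + pe) * (h * ↑hv.unit⁻¹) := by rw [hb]
      _ = (1 - δ * h) * ↑hv.unit⁻¹ := by noncomm_ring
  · calc 1 - ↑hu.unit⁻¹ * h * (δ + pe)
        = ↑hu.unit⁻¹ * (1 + h * pe) - ↑hu.unit⁻¹ * h * (δ + pe) := by rw [ha]
      _ = ↑hu.unit⁻¹ * (1 - h * δ) := by noncomm_ring
end

section
/- Let (W, δ, h) be a contraction over R, ∂ a perturbation with id_W + h∘∂ and id_W + ∂∘h invertible, h_∂ := (id_W + h∘∂)⁻¹ ∘ h, ϖ := id_W − δ∘h − h∘δ, and ϖ_∂ := id_W − (δ+∂)∘h_∂ − h_∂∘(δ+∂). Then the perturbed projection operator is conjugate to the unperturbed one: (id_W + h∘∂)⁻¹ ∘ ϖ ∘ (id_W + ∂∘h)⁻¹ = ϖ_∂; equivalently, ϖ_∂ ∘ (id_W + ∂∘h) = (id_W + h∘∂)⁻¹ ∘ ϖ. In particular the automorphism (id_W + h∘∂)⁻¹ of W carries range(ϖ) onto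 range(ϖ_∂). -/
/-!
Write `a = 1 + h∂`, `b = 1 + ∂h`. Since `a h = h b`, also `a⁻¹ h = h b⁻¹`, so `a h_∂ = h = h_∂ b` and
`a ϖ_∂ b = a b - a (δ + ∂) h - h (δ + ∂) b`. Expanding, the right-hand side is
`1 - δ h - h δ - h (δ∂ + ∂δ + ∂²) h`, and the last bracket vanishes because `δ` and `δ + ∂` both
square to zero. Hence `a ϖ_∂ b = ϖ`, which gives all three claims; the one on ranges uses that
`b⁻¹` is surjective.
-/

/-- The conjugation identity `a⁻¹ ϖ b⁻¹ = ϖ_∂` in an arbitrary ring. -/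
lemma perturbed_projection_ring {A : Type*} [Ring A] (δ h p : A) (hδδ : δ * δ = 0)
    (hpert : (δ + p) * (δ + p) = 0) (a b : Aˣ) (ha : (a : A) = 1 + h * p)
    (hb : (b : A) = 1 + p * h) :
    ↑a⁻¹ * (1 - δ * h - h * δ) * ↑b⁻¹ = 1 - (δ + p) * (↑a⁻¹ * h) - ↑a⁻¹ * h * (δ + p) := by
  have hab : (a : A) * h = h * b := by rw [ha, hb]; noncomm_ring
  have hq : ↑a⁻¹ * h * (b : A) = h := by rw [mul_assoc, ← hab, Units.inv_mul_cancel_left]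
  have hbr : δ * p + p * δ + p * p = 0 := by
    rw [← hpert, ← sub_eq_zero, ← neg_eq_zero, ← hδδ]; noncomm_ring
  have key : (a : A) * (1 - (δ + p) * (↑a⁻¹ * h) - ↑a⁻¹ * h * (δ + p)) * b
      = 1 - δ * h - h * δ := by
    calc (a : A) * (1 - (δ + p) * (↑a⁻¹ * h) - ↑a⁻¹ * h * (δ + p)) * b
        = a * b - a * (δ + p) * (↑a⁻¹ * h * b) - a * ↑a⁻¹ * h * (δ + p) * b := by noncomm_ring
      _ = (1 + h * p) * (1 + p * h) - (1 + h * p) * (δ + p) * h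
            - h * (δ + p) * (1 + p * h) := by rw [hq, Units.mul_inv, one_mul, ha, hb]
      _ = 1 - δ * h - h * δ - h * (δ * p + p * δ + p * p) * h := by noncomm_ring
      _ = 1 - δ * h - h * δ := by rw [hbr, mul_zero, zero_mul, sub_zero]
  rw [← key, mul_assoc (a : A), Units.inv_mul_cancel_left, Units.mul_inv_cancel_right]

/-- the perturbed projection operator is conjugate to the unperturbed one:
`(id + h∘∂)⁻¹ ∘ ϖ ∘ (id + ∂∘h)⁻¹ = ϖ_∂`, equivalently
`ϖ_∂ ∘ (id + ∂∘h) = (id + h∘∂)⁻¹ ∘ ϖ`; in particular the automorphism `(id + h∘∂)⁻¹`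
carries `range ϖ` onto `range ϖ_∂`. -/
theorem perturbed_projection_conjugation {R W : Type*} [CommRing R] [AddCommGroup W]
    [Module R W] (δ h pe : Module.End R W)
    (hδδ : δ * δ = 0) (hhh : h * h = 0) (hhδh : h * δ * h = h)
    (hpert : (δ + pe) * (δ + pe) = 0)
    (hu : IsUnit (1 + h * pe)) (hv : IsUnit (1 + pe * h)) :
    let hp : Module.End R W := ↑hu.unit⁻¹ * h
    let ϖ : Module.End R W := 1 - δ * h - h * δ
    let ϖp : Module.End R W := 1 - (δ + pe) * hp - hp * (δ + pe)
    ↑hu.unit⁻¹ * ϖ * ↑hv.unit⁻¹ = ϖp ∧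
    ϖp * (1 + pe * h) = ↑hu.unit⁻¹ * ϖ ∧
    Submodule.map (↑hu.unit⁻¹ : Module.End R W) (LinearMap.range ϖ) =
      LinearMap.range ϖp := by
  intro hp ϖ ϖp
  have key : ↑hu.unit⁻¹ * ϖ * ↑hv.unit⁻¹ = ϖp :=
    perturbed_projection_ring δ h pe hδδ hpert hu.unit hv.unit hu.unit_spec hv.unit_spec
  refine ⟨key, ?_, ?_⟩
  · rw [← key, mul_assoc, hv.val_inv_mul, mul_one]
  · have hsurj : LinearMap.range (↑hv.unit⁻¹ : Module.End R W) = ⊤ :=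
      LinearMap.range_eq_top.2 ((Module.End.isUnit_iff _).1 hv.unit⁻¹.isUnit).2
    rw [← key]
    exact ((LinearMap.range_comp_of_range_eq_top _ hsurj).trans (LinearMap.range_comp _ _)).symm
end

section
/- Let (W, δ, h) be a contraction over R, ∂ a perturbation with id_W + h∘∂ and id_W + ∂∘h invertible, and ϖ := id_W − δ∘h − h∘δ. Then the perturbed differential on the small space is the original differential plus a correction term: ϖ ∘ (δ+∂) ∘ (id_W + h∘∂)⁻¹ ∘ ϖ = δ ∘ ϖ + ϖ ∘ ∂ ∘ (id_W + h∘∂)⁻¹ ∘ ϖ. (Equivalently, with V := range(ϖ), τ : V → W the inclusion and σ : W → V the corestriction of ϖ, the perturbed differential δ_∂ := σ∘(δ+∂)∘(id_W + h∘∂)⁻¹∘τ on V satisfies δ_∂ = δ|_V + σ∘∂∘(id_W + h∘∂)⁻¹∘τ.) -/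
/-!
The operator `ϖ = 1 - δh - hδ` commutes with `δ` because `δδ = 0`, and kills `h` on both sides
because `hh = 0` and `hδh = h`; in particular it is idempotent. Writing `A = (1 + h∂)⁻¹` as
`A = 1 - h∂A` gives `ϖA = ϖ`, hence `ϖδA = δϖA = δϖ = ϖδ`. So the inverse `A` disappears from the
`δ`-part of `ϖ(δ+∂)A` before anything is restricted to the range of `ϖ`, and both forms of the
formula follow from `ϖ(δ+∂)A = ϖδ + ϖ∂A`.
-/

/-- the perturbed differential on the small space equals the original
differential plus a correction term. In operator form,
`ϖ ∘ (δ+∂) ∘ (id + h∘∂)⁻¹ ∘ ϖ = δ ∘ ϖ + ϖ ∘ ∂ ∘ (id + h∘∂)⁻¹ ∘ ϖ`;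
equivalently, on `V := range ϖ` with inclusion `τ`, corestriction `σ` of `ϖ`, the
perturbed differential `δ_∂ := σ∘(δ+∂)∘(id + h∘∂)⁻¹∘τ` satisfies
`δ_∂ = δ|_V + σ∘∂∘(id + h∘∂)⁻¹∘τ`. -/
theorem perturbed_differential_formula {R W : Type*} [CommRing R] [AddCommGroup W]
    [Module R W] (δ h pe : Module.End R W)
    (hδδ : δ * δ = 0) (hhh : h * h = 0) (hhδh : h * δ * h = h)
    (hpert : (δ + pe) * (δ + pe) = 0)
    (hu : IsUnit (1 + h * pe)) (hv : IsUnit (1 + pe * h)) :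
    let A : Module.End R W := ↑hu.unit⁻¹
    let ϖ : Module.End R W := 1 - δ * h - h * δ
    let V : Submodule R W := LinearMap.range ϖ
    let τ : V →ₗ[R] W := V.subtype
    let σ : W →ₗ[R] V := LinearMap.codRestrict V ϖ fun x => LinearMap.mem_range_self ϖ x
    ϖ * (δ + pe) * A * ϖ = δ * ϖ + ϖ * pe * A * ϖ ∧
    σ ∘ₗ (δ + pe) ∘ₗ A ∘ₗ τ = σ ∘ₗ δ ∘ₗ τ + σ ∘ₗ pe ∘ₗ A ∘ₗ τ := by
  intro A ϖ V τ σ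
  have hcomm : ϖ * δ = δ * ϖ := by
    simp only [ϖ, sub_mul, mul_sub, one_mul, mul_one, mul_assoc, hδδ, mul_zero]
    simp only [← mul_assoc, hδδ, zero_mul, sub_zero]
  have hϖh : ϖ * h = 0 := by
    simp only [ϖ, sub_mul, one_mul, hhδh]
    simp only [mul_assoc, hhh, mul_zero, sub_zero, sub_self]
  have hϖϖ : ϖ * ϖ = ϖ := by
    calc ϖ * ϖ = ϖ - ϖ * δ * h - ϖ * h * δ := by
          conv_lhs => rw [show ϖ * ϖ = ϖ * (1 - δ * h - h * δ) from rfl]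
          simp only [mul_sub, mul_one, mul_assoc]
      _ = ϖ := by rw [hcomm, mul_assoc, hϖh, mul_zero, zero_mul, sub_zero, sub_zero]
  have hA : (1 + h * pe) * A = 1 := hu.mul_val_inv
  have hϖA : ϖ * A = ϖ := by
    calc ϖ * A = ϖ * ((1 + h * pe) * A) := by
          rw [← mul_assoc, mul_add, mul_one, ← mul_assoc, hϖh, zero_mul, add_zero]
      _ = ϖ := by rw [hA, mul_one]
  have key : ϖ * δ * A = ϖ * δ := by rw [hcomm, mul_assoc, hϖA]
  constructor
  · rw [mul_add, add_mul, add_mul, key, hcomm, mul_assoc δ, hϖϖ]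
  · ext x
    have hx := LinearMap.congr_fun key (x : W)
    change ϖ ((δ + pe) (A x)) = ϖ (δ x) + ϖ (pe (A x))
    rw [LinearMap.add_apply, map_add]
    exact congrArg (· + ϖ (pe (A x))) hx
end

section
/- Let (W, δ, h) be a contraction over R, ∂ a perturbation with id_W + h∘∂ and id_W + ∂∘h invertible, and h_∂ := (id_W + h∘∂)⁻¹ ∘ h. Set ϖ := id_W − δ∘h − h∘δ, V := range(ϖ), τ : V → W the inclusion, σ : W → V the corestriction of ϖ, and define the perturbed injection τ_∂ := (id_W + h∘∂)⁻¹ ∘ τ, the perturbed surjection σ_∂ := σ ∘ (id_W + ∂∘h)⁻¹, and the perturbed differential δ_∂ := σ ∘ (δ+∂) ∘ (id_W + h∘∂)⁻¹ ∘ τ on V. Then (V, δ_∂) together with τ_∂, σ_∂, h_∂ is a contraction data for (W, δ+∂): δ_∂∘δ_∂ = 0, (δ+∂)∘τ_∂ = τ_∂∘δ_∂, σ_∂∘(δ+∂) = δ_∂∘σ_∂, σ_∂∘τ_∂ = id_V, id_W − τ_∂∘σ_∂ = h_∂∘(δ+∂) + (δ+∂)∘h_∂, σ_∂∘h_∂ =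 0, and h_∂∘τ_∂ = 0. -/
/-!
Write `D := δ + pe`, `p := 1 - δ * h - h * δ`, and `H := A * h = h * B`. The key identity is
`1 - H * D - D * H = A * p * B`: multiplied by `1 + h * pe` on the left and `1 + pe * h` on the
right, its left side expands to `p`. Call this element `P`. Since `D * D = 0`, `H * H = 0` and
`H * D * H = H`, the element `P` commutes with `D` and is annihilated by `H` on both sides.
Moreover `p * B * A * p = p`, because `B * A = 1 - pe * H - H * pe` and `H` annihilates `p` on
both sides; hence `A * p = P * A * p` and `p * B = p * B * P`. All seven claims follow by moving
`P` through `D` and `H`. These are identities in an arbitrary ring, and they transfer to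
`V = range p` because every element of `V` has the form `p w`.
-/

/-- The ring identities behind the perturbed contraction: `A` is a left inverse of
`1 + h * e`, `B` a right inverse of `1 + e * h`, and `p` is the projector of the unperturbed
contraction. -/
theorem perturbed_ring_identities {S : Type*} [Ring S] {d h e A B p D : S}
    (hdd : d * d = 0) (hhh : h * h = 0) (hhdh : h * d * h = h)
    (hD : D = d + e) (hDD : D * D = 0) (hp : p = 1 - d * h - h * d)
    (hA : A * (1 + h * e) = 1) (hB : (1 + e * h) * B = 1) :
    p * D * A * p * D * A * p = 0 ∧
    D * A * p = A * p * D * A * p ∧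
    p * B * D = p * D * A * p * B ∧
    p * B * A * p = p ∧
    1 - A * p * B = A * h * D + D * (A * h) ∧
    p * B * (A * h) = 0 ∧
    A * h * A * p = 0 := by
  have hph : p * h = 0 := by
    have : p * h = h - d * (h * h) - h * d * h := by rw [hp]; noncomm_ring
    rw [this, hhh, hhdh]; simp
  have hhp : h * p = 0 := by
    have : h * p = h - h * d * h - h * h * d := by rw [hp]; noncomm_ring
    rw [this, hhh, hhdh]; simp
  have hAB : A * h = h * B := by
    calc A * h = A * (h * ((1 + e * h) * B)) := by rw [hB, mul_one]
      _ = A * (1 + h * e) * h * B := by noncomm_ring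
      _ = h * B := by rw [hA, one_mul]
  obtain ⟨H, hH⟩ : ∃ H, H = A * h := ⟨_, rfl⟩
  have hH' : H = h * B := hH.trans hAB
  have hHH : H * H = 0 := by
    calc H * H = A * (h * h) * B := by
          nth_rewrite 1 [hH]; rw [hH']; noncomm_ring
      _ = 0 := by rw [hhh]; simp
  have hHDH : H * D * H = H := by
    calc H * D * H = A * (h * d * h + h * e * h) * B := by
          nth_rewrite 1 [hH]; rw [hH', hD]; noncomm_ring
      _ = A * h * ((1 + e * h) * B) := by rw [hhdh]; noncomm_ring
      _ = H := by rw [hB, mul_one, hH]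
  -- The quadratic terms in `h` assemble to `h * (D * D - d * d) * h`, which vanishes.
  have hUV : (1 + h * e) * (1 + e * h) - h * D * (1 + e * h) - (1 + h * e) * D * h = p := by
    have : (1 + h * e) * (1 + e * h) - h * D * (1 + e * h) - (1 + h * e) * D * h
        = p - h * (D * D) * h + h * (d * d) * h := by
      rw [hp, hD]; noncomm_ring
    rw [this, hDD, hdd]; simp
  have hP : A * p * B = 1 - H * D - D * H := by
    calc A * p * B
        = (A * (1 + h * e)) * ((1 + e * h) * B) - A * h * D * ((1 + e * h) * B)
          - (A * (1 + h * e)) * D * (h * B) := by rw [← hUV]; noncomm_ring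
      _ = 1 - H * D - D * H := by rw [hA, hB, ← hH, ← hH']; simp
  have hPD : A * p * B * D = D * (A * p * B) := by
    have h1 : A * p * B * D = D - H * (D * D) - D * H * D := by rw [hP]; noncomm_ring
    have h2 : D * (A * p * B) = D - D * H * D - D * D * H := by rw [hP]; noncomm_ring
    rw [h1, h2, hDD]; simp
  have hHP : H * (A * p * B) = 0 := by
    have : H * (A * p * B) = H - H * H * D - H * D * H := by rw [hP]; noncomm_ring
    rw [this, hHH, hHDH]; simp
  have hPH : A * p * B * H = 0 := by
    have : A * p * B * H = H - H * D * H - D * (H * H) := by rw [hP]; noncomm_ring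
    rw [this, hHH, hHDH]; simp
  have hA1 : A = 1 - H * e := by
    rw [hH, ← hA]; noncomm_ring
  have hB1 : B = 1 - e * H := by
    rw [hH', ← hB]; noncomm_ring
  have hpH : p * H = 0 := by rw [hH', ← mul_assoc, hph, zero_mul]
  have hHp : H * p = 0 := by rw [hH, mul_assoc, hhp, mul_zero]
  have hpp : p * p = p := by
    calc p * p = p - p * d * h - p * h * d := by nth_rewrite 2 [hp]; noncomm_ring
      _ = p - (d * h - d * (h * d * h) - h * (d * d) * h) := by
          rw [hph]; rw [hp]; noncomm_ring
      _ = p := by rw [hhdh, hdd]; simp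
  have hBA : p * B * A * p = p := by
    have : p * B * A * p
        = p * p - p * e * (H * p) - p * H * e * p + p * e * (H * H) * e * p := by
      nth_rewrite 1 [hA1, hB1]; noncomm_ring
    rw [this, hpp, hHp, hpH, hHH]; simp
  have hAp : A * p * B * (A * p) = A * p := by
    calc A * p * B * (A * p) = A * (p * B * A * p) := by noncomm_ring
      _ = A * p := by rw [hBA]
  have hpB : p * B * (A * p * B) = p * B := by
    calc p * B * (A * p * B) = (p * B * A * p) * B := by noncomm_ring
      _ = p * B := by rw [hBA]
  have hHDA : H * (D * (A * p)) = 0 := by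
    calc H * (D * (A * p)) = H * (D * (A * p * B) * (A * p)) := by rw [mul_assoc D, hAp]
      _ = H * (A * p * B) * (D * (A * p)) := by rw [← hPD]; noncomm_ring
      _ = 0 := by rw [hHP, zero_mul]
  -- On the image of `D * A * p` the factor `B = 1 - e * H` acts as the identity.
  have hBDA : B * (D * (A * p)) = D * (A * p) := by
    calc B * (D * (A * p)) = D * (A * p) - e * (H * (D * (A * p))) := by
          nth_rewrite 1 [hB1]; noncomm_ring
      _ = D * (A * p) := by rw [hHDA]; simp
  have hDA : D * (A * p) = A * p * (D * (A * p)) := by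
    calc D * (A * p) = D * (A * p * B) * (A * p) := by rw [mul_assoc D, hAp]
      _ = A * p * (B * (D * (A * p))) := by rw [← hPD]; noncomm_ring
      _ = A * p * (D * (A * p)) := by rw [hBDA]
  refine ⟨?_, ?_, ?_, hBA, ?_, ?_, ?_⟩
  · calc p * D * A * p * D * A * p = p * D * (A * p * (D * (A * p))) := by noncomm_ring
      _ = p * (D * D) * (A * p) := by rw [← hDA]; noncomm_ring
      _ = 0 := by rw [hDD]; simp
  · simpa only [mul_assoc] using hDA
  · calc p * B * D = p * B * (A * p * B * D) := by rw [← mul_assoc (p * B), hpB]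
      _ = p * (B * (D * (A * p))) * B := by rw [hPD]; noncomm_ring
      _ = p * D * A * p * B := by rw [hBDA]; noncomm_ring
  · rw [hP, ← hH]; abel
  · calc p * B * (A * h) = p * B * (A * p * B * H) := by
          rw [← hH, ← mul_assoc (p * B) (A * p * B), hpB]
      _ = 0 := by rw [hPH, mul_zero]
  · calc A * h * A * p = H * (A * p * B) * (A * p) := by
          rw [mul_assoc H, hAp, hH]; noncomm_ring
      _ = 0 := by rw [hHP, zero_mul]

/-- the full perturbed contraction data. With `ϖ := id − δ∘h − h∘δ`,
`V := range ϖ`, inclusion `τ`, corestriction `σ` of `ϖ`, perturbed injection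
`τ_∂ := (id + h∘∂)⁻¹∘τ`, perturbed surjection `σ_∂ := σ∘(id + ∂∘h)⁻¹`, perturbed
differential `δ_∂ := σ∘(δ+∂)∘(id + h∘∂)⁻¹∘τ` and perturbed homotopy
`h_∂ := (id + h∘∂)⁻¹∘h`, the data `(V, δ_∂)`, `τ_∂`, `σ_∂`, `h_∂` is a contraction
data for `(W, δ+∂)`. -/
theorem perturbed_contraction_data {R W : Type*} [CommRing R] [AddCommGroup W]
    [Module R W] (δ h pe : Module.End R W)
    (hδδ : δ * δ = 0) (hhh : h * h = 0) (hhδh : h * δ * h = h)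
    (hpert : (δ + pe) * (δ + pe) = 0)
    (hu : IsUnit (1 + h * pe)) (hv : IsUnit (1 + pe * h)) :
    let A : Module.End R W := ↑hu.unit⁻¹
    let B : Module.End R W := ↑hv.unit⁻¹
    let hp : Module.End R W := A * h
    let ϖ : Module.End R W := 1 - δ * h - h * δ
    let V : Submodule R W := LinearMap.range ϖ
    let τ : V →ₗ[R] W := V.subtype
    let σ : W →ₗ[R] V := LinearMap.codRestrict V ϖ fun x => LinearMap.mem_range_self ϖ x
    let τp : V →ₗ[R] W := A ∘ₗ τ
    let σp : W →ₗ[R] V := σ ∘ₗ B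
    let δp : V →ₗ[R] V := σ ∘ₗ (δ + pe) ∘ₗ A ∘ₗ τ
    δp ∘ₗ δp = 0 ∧
    (δ + pe) ∘ₗ τp = τp ∘ₗ δp ∧
    σp ∘ₗ (δ + pe) = δp ∘ₗ σp ∧
    σp ∘ₗ τp = LinearMap.id ∧
    LinearMap.id - τp ∘ₗ σp = hp * (δ + pe) + (δ + pe) * hp ∧
    σp ∘ₗ hp = 0 ∧
    hp ∘ₗ τp = 0 := by
  intro A B hp ϖ V τ σ τp σp δp
  obtain ⟨h1, h2, h3, h4, h5, h6, h7⟩ :=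
    perturbed_ring_identities (D := δ + pe) (p := ϖ) hδδ hhh hhδh rfl hpert rfl
      (A := A) (B := B) hu.val_inv_mul hv.mul_val_inv
  refine ⟨?_, ?_, ?_, ?_, ?_, ?_, ?_⟩
  · ext ⟨_, w, rfl⟩
    exact LinearMap.congr_fun h1 w
  · ext ⟨_, w, rfl⟩
    exact LinearMap.congr_fun h2 w
  · ext w
    exact LinearMap.congr_fun h3 w
  · ext ⟨_, w, rfl⟩
    exact LinearMap.congr_fun h4 w
  · exact h5
  · ext w
    exact LinearMap.congr_fun h6 w
  · ext ⟨_, w, rfl⟩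
    exact LinearMap.congr_fun h7 w
end

section
/- Let (W, δ, h) be a contraction over R, ∂ a perturbation with id_W + h∘∂ and id_W + ∂∘h invertible, ϖ := id_W − δ∘h − h∘δ, V := range(ϖ), τ : V → W the inclusion, σ : W → V the corestriction of ϖ, and h_∂ := (id_W + h∘∂)⁻¹ ∘ h. Assume in addition that h∘∂∘h = 0. Then the perturbed homotopy operator is unchanged, h_∂ = h, and the perturbed injection is τ_∂ := (id_W + h∘∂)⁻¹∘τ = (id_W − h∘∂)∘τ. If moreover ϖ∘∂∘h = 0, then the perturbed surjection is unchanged, σ_∂ := σ∘(id_W + ∂∘h)⁻¹ = σ, and the perturbed differential on V is δ_∂ = δ|_V + σ∘∂∘τ (in operator form: ϖ ∘ (δ+∂) ∘ (id_W + h∘∂)⁻¹ ∘ ϖ = δ∘ϖ + ϖ∘∂∘ϖ). -/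
/-!
Since `h∂h = 0`, both `h∂` and `∂h` square to zero, so the two inverses are `1 - h∂` and `1 - ∂h`.
The claims about the homotopy, the injection and the surjection follow by multiplying out. For the
differential, the contraction identities give `ϖδh = 0`, and `ϖ∂h = 0` by assumption, so
`ϖ(δ + ∂)h = 0`; hence the correction term of `(1 + h∂)⁻¹ = 1 - h∂` dies and
`ϖ(δ + ∂)(1 + h∂)⁻¹ = ϖδ + ϖ∂`. Finally `ϖ` is an idempotent chain map, so `ϖδϖ = δϖ`.
-/

theorem unit_inv_eq_one_sub {S : Type*} [Ring S] {a : S} (ha : a * a = 0) (hu : IsUnit (1 + a)) :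
    (↑hu.unit⁻¹ : S) = 1 - a := by
  refine Units.inv_eq_of_mul_eq_one_right ?_
  rw [IsUnit.unit_spec, mul_sub, mul_one, add_mul, one_mul, ha, add_zero, add_sub_cancel_right]

/-- simplifications under side conditions. If `h∘∂∘h = 0`, then the
perturbed homotopy is unchanged (`h_∂ = h`) and the perturbed injection is
`τ_∂ = (id − h∘∂)∘τ`. If moreover `ϖ∘∂∘h = 0`, then the perturbed surjection is
unchanged (`σ_∂ = σ`) and the perturbed differential is `δ_∂ = δ|_V + σ∘∂∘τ`
(in operator form `ϖ∘(δ+∂)∘(id + h∘∂)⁻¹∘ϖ = δ∘ϖ + ϖ∘∂∘ϖ`). -/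
theorem perturbed_contraction_simplifications {R W : Type*} [CommRing R] [AddCommGroup W]
    [Module R W] (δ h pe : Module.End R W)
    (hδδ : δ * δ = 0) (hhh : h * h = 0) (hhδh : h * δ * h = h)
    (hpert : (δ + pe) * (δ + pe) = 0)
    (hu : IsUnit (1 + h * pe)) (hv : IsUnit (1 + pe * h))
    (hside : h * pe * h = 0) :
    let A : Module.End R W := ↑hu.unit⁻¹
    let B : Module.End R W := ↑hv.unit⁻¹
    let ϖ : Module.End R W := 1 - δ * h - h * δ
    let V : Submodule R W := LinearMap.range ϖ
    let τ : V →ₗ[R] W := V.subtype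
    let σ : W →ₗ[R] V := LinearMap.codRestrict V ϖ fun x => LinearMap.mem_range_self ϖ x
    (A * h = h ∧ A ∘ₗ τ = (1 - h * pe) ∘ₗ τ) ∧
    (ϖ * pe * h = 0 →
      σ ∘ₗ B = σ ∧
      ϖ * (δ + pe) * A * ϖ = δ * ϖ + ϖ * pe * ϖ ∧
      σ ∘ₗ (δ + pe) ∘ₗ A ∘ₗ τ = σ ∘ₗ δ ∘ₗ τ + σ ∘ₗ pe ∘ₗ τ) := by
  intro A B ϖ V τ σ
  have hA : A = 1 - h * pe :=
    unit_inv_eq_one_sub (by rw [← mul_assoc, hside, zero_mul]) hu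
  have hB : B = 1 - pe * h :=
    unit_inv_eq_one_sub (by rw [mul_assoc, ← mul_assoc h, hside, mul_zero]) hv
  refine ⟨⟨by rw [hA, sub_mul, one_mul, hside, sub_zero], by rw [hA]⟩, fun hw => ?_⟩
  have hϖh : ϖ * h = 0 := by
    change (1 - δ * h - h * δ) * h = 0
    rw [sub_mul, sub_mul, one_mul, mul_assoc δ, hhh, hhδh, mul_zero, sub_zero, sub_self]
  have hϖδ : ϖ * δ = δ * ϖ := by
    change (1 - δ * h - h * δ) * δ = δ * (1 - δ * h - h * δ)
    simp only [sub_mul, mul_sub, one_mul, mul_one, mul_assoc, hδδ, mul_zero, sub_zero]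
    rw [← mul_assoc δ δ, hδδ, zero_mul, sub_zero]
  have hϖδh : ϖ * δ * h = 0 := by
    rw [hϖδ, mul_assoc, hϖh, mul_zero]
  have hϖϖ : ϖ * ϖ = ϖ := by
    change ϖ * (1 - δ * h - h * δ) = ϖ
    rw [mul_sub, mul_sub, mul_one, ← mul_assoc, ← mul_assoc, hϖδh, hϖh, zero_mul, sub_zero,
      sub_zero]
  have hkey : ϖ * (δ + pe) * A = ϖ * δ + ϖ * pe := by
    rw [hA, mul_sub, mul_one, ← mul_assoc, mul_add, add_mul, hϖδh, hw, add_zero, zero_mul,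
      sub_zero]
  have hϖB : ϖ * B = ϖ := by
    rw [hB, mul_sub, mul_one, ← mul_assoc, hw, sub_zero]
  refine ⟨?_, ?_, ?_⟩
  · ext x
    exact LinearMap.congr_fun hϖB x
  · rw [hkey, add_mul, hϖδ, mul_assoc δ, hϖϖ]
  · ext x
    exact LinearMap.congr_fun hkey (x : W)
end

section
/- (Hom-space contraction.) Let (W, δ, h) and (W', δ', h') be cochain complexes of R-modules each equipped with a contraction homotopy, and set ϖ' := id − δ'∘h' − h'∘δ' (componentwise). For n ∈ ℤ define Homⁿ(W, W') := ∏_{i∈ℤ} Hom_R(Wⁱ, W'^{i+n}), with differential D : Homⁿ → Homⁿ⁺¹ given componentwise by (D f)ⁱ = δ'^{i+n} ∘ fⁱ − (−1)ⁿ f^{i+1} ∘ δⁱ, and define H : Homⁿ → Homⁿ⁻¹ componentwise by (H f)ⁱ = h'^{i+n} ∘ fⁱ + (−1)ⁿ ϖ'^{i+n−1} ∘ f^{i−1} ∘ hⁱ. Then D∘D = 0, H∘H = 0, and H∘D∘H = H; that is, (Hom(W, W'), D, H) is a contraction. -/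
/-! The casts between degrees are removed by passing to total spaces: a family of maps
`f i : W i → W' (φ i)` is determined by the induced map `tot φ f : ⨁ W i → ⨁ W' i`, and on
direct sums transport along an equality of degrees becomes the identity (`lof_lcast`). Under this
faithful translation (`tot_injective`), with `s = (-1)ⁿ`, the operators become
`D F = d' F - s F d` and `H F = h' F + s p' F h` (`tot_homD`, `tot_homH`), with `p' = 1 - d' h' - h' d'`.

The side conditions `h' h' = 0`, `h' d' h' = h'` and `d' d' = 0` give
`h' p' = 0 = p' h'`, `p' p' = p'`, `h' d' p' = 0` and `p' d' h' = 0`. Since `D` and `H` change the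
sign `s`, expanding the three composites leaves
* `D D F = d' d' F - s d' F d + s d' F d - F d d = 0`,
* `H H F = h' h' F + s h' p' F h - s p' h' F h - p' p' F h h = 0`,
* `H D H F = h' d' h' F + s p' p' F h d h = h' F + s p' F h = H F`, every other term
  containing one of the vanishing products.
-/

section HomContraction

variable {R : Type*} [CommRing R]

/-- Transport a linear map along an equality of degrees. -/
def lcast {R : Type*} [CommRing R] {W : ℤ → Type*} [∀ i, AddCommGroup (W i)]
    [∀ i, Module R (W i)] {a b : ℤ} (hab : a = b) : W a →ₗ[R] W b := by
  subst hab; exact LinearMap.id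

variable {W W' : ℤ → Type*}
  [∀ i, AddCommGroup (W i)] [∀ i, Module R (W i)]
  [∀ i, AddCommGroup (W' i)] [∀ i, Module R (W' i)]

/-- The projection operator `ϖ = id − δ∘h − h∘δ` of a contraction, in degree `m`. -/
def proj (δ : ∀ i, W i →ₗ[R] W (i+1)) (h : ∀ i, W i →ₗ[R] W (i-1)) (m : ℤ) :
    W m →ₗ[R] W m :=
  LinearMap.id - (lcast (show m-1+1 = m by omega)).comp ((δ (m-1)).comp (h m))
    - (lcast (show m+1-1 = m by omega)).comp ((h (m+1)).comp (δ m))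

/-- The differential on the `Hom` complex:
`(D f)ⁱ = δ'^{i+n} ∘ fⁱ − (−1)ⁿ f^{i+1} ∘ δⁱ`. -/
def homD (δ : ∀ i, W i →ₗ[R] W (i+1)) (δ' : ∀ i, W' i →ₗ[R] W' (i+1)) {n : ℤ}
    (f : ∀ i, W i →ₗ[R] W' (i+n)) : ∀ i, W i →ₗ[R] W' (i+(n+1)) := fun i =>
  (lcast (show i+n+1 = i+(n+1) by omega)).comp ((δ' (i+n)).comp (f i))
    - (((-1 : ℤˣ) ^ n : ℤˣ) : ℤ) •
      ((lcast (show i+1+n = i+(n+1) by omega)).comp ((f (i+1)).comp (δ i)))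

/-- The homotopy on the `Hom` complex:
`(H f)ⁱ = h'^{i+n} ∘ fⁱ + (−1)ⁿ ϖ'^{i+n−1} ∘ f^{i−1} ∘ hⁱ`. -/
def homH (δ' : ∀ i, W' i →ₗ[R] W' (i+1)) (h' : ∀ i, W' i →ₗ[R] W' (i-1))
    (h : ∀ i, W i →ₗ[R] W (i-1)) {n : ℤ}
    (f : ∀ i, W i →ₗ[R] W' (i+n)) : ∀ i, W i →ₗ[R] W' (i+(n-1)) := fun i =>
  (lcast (show i+n-1 = i+(n-1) by omega)).comp ((h' (i+n)).comp (f i))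
    + (((-1 : ℤˣ) ^ n : ℤˣ) : ℤ) •
      ((lcast (show i-1+n = i+(n-1) by omega)).comp
        ((proj δ' h' (i-1+n)).comp ((f (i-1)).comp (h i))))

/-- Recast a degree-`n` map as a degree-`m` map along an equality `n = m`. -/
def homCast {n m : ℤ} (hnm : n = m) (f : ∀ i, W i →ₗ[R] W' (i+n)) :
    ∀ i, W i →ₗ[R] W' (i+m) := by
  subst hnm; exact f

section Total

open DirectSum

/-- The map of direct sums induced by a family of maps `W i → W' (φ i)`. The reindexing `φ` is
arbitrary, so that it covers `i ↦ i + n` as well as `i ↦ i - 1`. -/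
noncomputable def tot (φ : ℤ → ℤ) (f : ∀ i, W i →ₗ[R] W' (φ i)) :
    (⨁ i, W i) →ₗ[R] ⨁ i, W' i :=
  DirectSum.toModule R ℤ _ fun i => (DirectSum.lof R ℤ W' (φ i)).comp (f i)

theorem tot_lof (φ : ℤ → ℤ) (f : ∀ i, W i →ₗ[R] W' (φ i)) (i : ℤ) (x : W i) :
    tot φ f (lof R ℤ W i x) = lof R ℤ W' (φ i) (f i x) := by
  simp [tot]

theorem tot_injective (φ : ℤ → ℤ) :
    Function.Injective (tot φ : (∀ i, W i →ₗ[R] W' (φ i)) → _) := by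
  intro f g hfg
  funext i
  ext x
  have := LinearMap.congr_fun hfg (lof R ℤ W i x)
  rw [tot_lof, tot_lof] at this
  exact DirectSum.of_injective (β := W') (φ i) this

theorem lof_lcast {a b : ℤ} (hab : a = b) (x : W a) :
    lof R ℤ W b (lcast (R := R) hab x) = lof R ℤ W a x := by
  subst hab; rfl

theorem tot_homCast {n m : ℤ} (hnm : n = m) (f : ∀ i, W i →ₗ[R] W' (i + n)) :
    tot (· + m) (homCast hnm f) = tot (· + n) f := by
  subst hnm; rfl

/-- A family whose consecutive composites vanish induces a square-zero map of the total space. -/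
theorem tot_tot_eq_zero {φ : ℤ → ℤ} (f : ∀ i, W i →ₗ[R] W (φ i))
    (hff : ∀ i, (f (φ i)).comp (f i) = 0) (x : ⨁ i, W i) : tot φ f (tot φ f x) = 0 := by
  have : (tot φ f).comp (tot φ f) = 0 := by
    refine DirectSum.linearMap_ext R fun i => ?_
    ext1 y
    have := LinearMap.congr_fun (hff i) y
    simp only [LinearMap.comp_apply, LinearMap.zero_apply] at this
    simp only [LinearMap.comp_apply, LinearMap.zero_apply, tot_lof, this, map_zero]
  exact LinearMap.congr_fun this x

theorem tot_hdh (δ : ∀ i, W i →ₗ[R] W (i + 1)) (h : ∀ i, W i →ₗ[R] W (i - 1))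
    (hhδh : ∀ i, (h i).comp
      ((lcast (show i-1+1 = i by omega)).comp ((δ (i-1)).comp (h i))) = h i)
    (x : ⨁ i, W i) :
    tot (· - 1) h (tot (· + 1) δ (tot (· - 1) h x)) = tot (· - 1) h x := by
  have : (tot (· - 1) h).comp ((tot (· + 1) δ).comp (tot (· - 1) h)) = tot (· - 1) h := by
    refine DirectSum.linearMap_ext R fun i => ?_
    ext1 y
    have := LinearMap.congr_fun (hhδh i) y
    simp only [LinearMap.comp_apply] at this
    simp only [LinearMap.comp_apply]
    rw [tot_lof, tot_lof, ← lof_lcast (R := R) (show i-1+1 = i by omega), tot_lof, this]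
  exact LinearMap.congr_fun this x

theorem tot_proj (δ : ∀ i, W i →ₗ[R] W (i + 1)) (h : ∀ i, W i →ₗ[R] W (i - 1))
    (x : ⨁ i, W i) :
    tot id (proj δ h) x = x - tot (· + 1) δ (tot (· - 1) h x)
      - tot (· - 1) h (tot (· + 1) δ x) := by
  have : tot id (proj δ h) = LinearMap.id - (tot (· + 1) δ).comp (tot (· - 1) h)
      - (tot (· - 1) h).comp (tot (· + 1) δ) := by
    refine DirectSum.linearMap_ext R fun i => ?_
    ext1 y
    simp only [LinearMap.comp_apply, LinearMap.sub_apply, LinearMap.id_apply, tot_lof, proj, id,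
      map_sub, lof_lcast]
  exact LinearMap.congr_fun this x

theorem tot_homD (δ : ∀ i, W i →ₗ[R] W (i+1)) (δ' : ∀ i, W' i →ₗ[R] W' (i+1)) {n : ℤ}
    (f : ∀ i, W i →ₗ[R] W' (i+n)) (x : ⨁ i, W i) :
    tot (· + (n + 1)) (homD δ δ' f) x = tot (· + 1) δ' (tot (· + n) f x)
      - (((-1 : ℤˣ) ^ n : ℤˣ) : ℤ) • tot (· + n) f (tot (· + 1) δ x) := by
  have : tot (· + (n + 1)) (homD δ δ' f) = (tot (· + 1) δ').comp (tot (· + n) f)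
      - (((-1 : ℤˣ) ^ n : ℤˣ) : ℤ) • (tot (· + n) f).comp (tot (· + 1) δ) := by
    refine DirectSum.linearMap_ext R fun i => ?_
    ext1 y
    simp only [LinearMap.comp_apply, LinearMap.sub_apply, LinearMap.smul_apply, tot_lof, homD,
      map_sub, map_zsmul, lof_lcast]
  exact LinearMap.congr_fun this x

theorem tot_homH (δ' : ∀ i, W' i →ₗ[R] W' (i+1)) (h' : ∀ i, W' i →ₗ[R] W' (i-1))
    (h : ∀ i, W i →ₗ[R] W (i-1)) {n : ℤ} (f : ∀ i, W i →ₗ[R] W' (i+n)) (x : ⨁ i, W i) :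
    tot (· + (n - 1)) (homH δ' h' h f) x = tot (· - 1) h' (tot (· + n) f x)
      + (((-1 : ℤˣ) ^ n : ℤˣ) : ℤ) •
        tot id (proj δ' h') (tot (· + n) f (tot (· - 1) h x)) := by
  have : tot (· + (n - 1)) (homH δ' h' h f) = (tot (· - 1) h').comp (tot (· + n) f)
      + (((-1 : ℤˣ) ^ n : ℤˣ) : ℤ) •
        (tot id (proj δ' h')).comp ((tot (· + n) f).comp (tot (· - 1) h)) := by
    refine DirectSum.linearMap_ext R fun i => ?_
    ext1 y
    simp only [LinearMap.comp_apply, LinearMap.add_apply, LinearMap.smul_apply, tot_lof, homH,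
      map_add, map_zsmul, lof_lcast, id]
  exact LinearMap.congr_fun this x

theorem sign_add_one (n : ℤ) :
    (((-1 : ℤˣ) ^ (n + 1) : ℤˣ) : ℤ) = -(((-1 : ℤˣ) ^ n : ℤˣ) : ℤ) := by
  rw [zpow_add]; simp

theorem sign_sub_one (n : ℤ) :
    (((-1 : ℤˣ) ^ (n - 1) : ℤˣ) : ℤ) = -(((-1 : ℤˣ) ^ n : ℤˣ) : ℤ) := by
  rw [zpow_sub]; simp

theorem sign_smul_sign_smul {M : Type*} [AddCommGroup M] (n : ℤ) (x : M) :
    (((-1 : ℤˣ) ^ n : ℤˣ) : ℤ) • (((-1 : ℤˣ) ^ n : ℤˣ) : ℤ) • x = x := by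
  rw [smul_smul, ← Units.val_mul, Int.units_mul_self]; simp

end Total

/-- Hom-space contraction: if `(W, δ, h)` and `(W', δ', h')` are cochain
complexes with contraction homotopies, then `(Hom(W, W'), D, H)` is a contraction:
`D∘D = 0`, `H∘H = 0`, `H∘D∘H = H`. -/
theorem hom_space_contraction
    (δ : ∀ i, W i →ₗ[R] W (i+1)) (h : ∀ i, W i →ₗ[R] W (i-1))
    (δ' : ∀ i, W' i →ₗ[R] W' (i+1)) (h' : ∀ i, W' i →ₗ[R] W' (i-1))
    (hδδ : ∀ i, (δ (i+1)).comp (δ i) = 0)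
    (hhh : ∀ i, (h (i-1)).comp (h i) = 0)
    (hhδh : ∀ i, (h i).comp
      ((lcast (show i-1+1 = i by omega)).comp ((δ (i-1)).comp (h i))) = h i)
    (hδδ' : ∀ i, (δ' (i+1)).comp (δ' i) = 0)
    (hhh' : ∀ i, (h' (i-1)).comp (h' i) = 0)
    (hhδh' : ∀ i, (h' i).comp
      ((lcast (show i-1+1 = i by omega)).comp ((δ' (i-1)).comp (h' i))) = h' i) :
    ∀ (n : ℤ) (f : ∀ i, W i →ₗ[R] W' (i+n)),
      homD δ δ' (homD δ δ' f) = 0 ∧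
      homH δ' h' h (homH δ' h' h f) = 0 ∧
      homH δ' h' h (homD δ δ' (homH δ' h' h f)) =
        homCast (show n-1 = n-1+1-1 by omega) (homH δ' h' h f) := by
  intro n f
  have dd := tot_tot_eq_zero δ hδδ
  have hh := tot_tot_eq_zero h hhh
  have hdh := tot_hdh δ h hhδh
  have dd' := tot_tot_eq_zero δ' hδδ'
  have hh' := tot_tot_eq_zero h' hhh'
  have hdh' := tot_hdh δ' h' hhδh'
  have hp' : ∀ y, tot (· - 1) h' (tot id (proj δ' h') y) = 0 := fun y => by
    simp [tot_proj, hh', hdh']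
  have ph' : ∀ y, tot id (proj δ' h') (tot (· - 1) h' y) = 0 := fun y => by
    simp [tot_proj, hh', hdh']
  have pp' : ∀ y, tot id (proj δ' h') (tot id (proj δ' h') y) = tot id (proj δ' h') y :=
    fun y => by
      rw [tot_proj δ' h' (tot id (proj δ' h') y), hp']
      simp [tot_proj, dd', hdh']
  have hdp' : ∀ y, tot (· - 1) h' (tot (· + 1) δ' (tot id (proj δ' h') y)) = 0 := fun y => by
    simp [tot_proj, dd', hdh']
  have pdh' : ∀ y, tot id (proj δ' h') (tot (· + 1) δ' (tot (· - 1) h' y)) = 0 := fun y => by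
    simp [tot_proj, dd', hdh']
  refine ⟨tot_injective (· + (n + 1 + 1)) ?_, tot_injective (· + (n - 1 - 1)) ?_,
    tot_injective (· + (n - 1 + 1 - 1)) ?_⟩
  · refine LinearMap.ext fun x => ?_
    have h0 : tot (R := R) (W := W) (W' := W') (· + (n + 1 + 1)) 0 = 0 :=
      DirectSum.linearMap_ext R fun i => by ext1 y; simp [tot_lof]
    rw [h0]
    simp only [tot_homD, map_sub, map_zsmul, sign_add_one, dd, dd', map_zero,
      LinearMap.zero_apply, smul_zero]
    module
  · refine LinearMap.ext fun x => ?_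
    have h0 : tot (R := R) (W := W) (W' := W') (· + (n - 1 - 1)) 0 = 0 :=
      DirectSum.linearMap_ext R fun i => by ext1 y; simp [tot_lof]
    rw [h0]
    simp only [tot_homH, map_add, map_zsmul, hh, hh', hp', ph', map_zero,
      LinearMap.zero_apply, smul_zero, add_zero]
  · rw [tot_homCast]
    refine LinearMap.ext fun x => ?_
    simp only [tot_homH, tot_homD, map_add, map_zsmul, sign_sub_one, sign_add_one,
      hh, hh', hp', ph', pp', hdh, hdh', hdp', pdh', map_zero, smul_zero, add_zero, zero_add,
      neg_neg, neg_smul, sub_neg_eq_add, sign_smul_sign_smul]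

end HomContraction
end

section
/- (Hom-space contraction data.) Let (W, δ, h) and (W', δ', h') be cochain complexes of R-modules with contraction homotopies; set ϖⁿ := id − δⁿ⁻¹∘hⁿ − hⁿ⁺¹∘δⁿ, Vⁿ := range(ϖⁿ) (a δ-invariant family with induced differential d), let τ : V → W be the inclusion and σ : W → V the corestriction of ϖ, and similarly ϖ', V', τ', σ' for W'. Let D and H on Hom(W, W') and the analogous differential D̃ on Hom(V, V') be as in the Hom-space contraction, where Homⁿ(W,W') := ∏_i Hom_R(Wⁱ, W'^{i+n}), (D f)ⁱ = δ'^{i+n}∘fⁱ − (−1)ⁿ f^{i+1}∘δⁱ, and (H f)ⁱ = h'^{i+n}∘fⁱ + (−1)ⁿ ϖ'^{i+n−1}∘f^{i−1}∘hⁱ. Define T : Homⁿ(V, V') → Homⁿ(W, W') by (T g)ⁱ = τ'^{i+n} ∘ gⁱ ∘ σⁱ and Σ : Homⁿ(W, W') → Homⁿ(V, V') by (Σ f)ⁱ = σ'^{i+n} ∘ fⁱ ∘ τⁱ. Then Σ∘T = id, T and Σ are cochain maps (D∘T = T∘D̃ and D̃∘Σ = Σ∘D), id − T∘Σ = D∘H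 + H∘D, Σ∘H = 0, and H∘T = 0; i.e., (Hom(V,V'), D̃) with T, Σ, H is a contraction data for (Hom(W,W'), D). -/
/-!
The identity `id − T∘Σ = D∘H + H∘D` is a telescoping computation. Write `s = (−1)ⁿ`. Expanding
`DHf + HDf` gives `(δ'h' + h'δ') f + ϖ' f (hδ + δh)` together with the terms `± s h' f δ`, which
cancel, and `s (δ'ϖ' − ϖ'δ') f h`, which vanishes because `ϖ'` is a cochain map. Since
`δh + hδ = id − ϖ`, what remains is `(f − ϖ'f) + (ϖ'f − ϖ'fϖ) = f − ϖ'fϖ`, and `τσ = ϖ`.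

The other claims follow from the relations `ϖδ = δϖ`, `ϖh = 0`, `hϖ = 0`, `ϖϖ = ϖ`
(lemmas `proj_δ`, `proj_h`, `h_proj`, `proj_proj`), all consequences of `δδ = 0`, `hh = 0`,
`hδh = h`.

Degrees are compared through the transports `lcast`. Every family of maps commutes with `lcast`,
so moving all transports to the outside yields a normal form in which both sides of an identity can
be compared.
-/

section HomContractionData

variable {R : Type*} [CommRing R]

variable {W W' : ℤ → Type*}
  [∀ i, AddCommGroup (W i)] [∀ i, Module R (W i)]
  [∀ i, AddCommGroup (W' i)] [∀ i, Module R (W' i)]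

/-- The small complex `V = range ϖ`, in degree `i`. -/
def Vfam (δ : ∀ i, W i →ₗ[R] W (i+1)) (h : ∀ i, W i →ₗ[R] W (i-1)) (i : ℤ) :
    Submodule R (W i) := LinearMap.range (proj δ h i)

/-- The inclusion `τ : V → W`. -/
def tauV (δ : ∀ i, W i →ₗ[R] W (i+1)) (h : ∀ i, W i →ₗ[R] W (i-1)) (i : ℤ) :
    Vfam δ h i →ₗ[R] W i := (Vfam δ h i).subtype

/-- The surjection `σ : W → V`, the corestriction of `ϖ`. -/
def sigV (δ : ∀ i, W i →ₗ[R] W (i+1)) (h : ∀ i, W i →ₗ[R] W (i-1)) (i : ℤ) :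
    W i →ₗ[R] Vfam δ h i :=
  LinearMap.codRestrict (Vfam δ h i) (proj δ h i) fun x =>
    LinearMap.mem_range_self (proj δ h i) x

/-- The induced differential `d = σ∘δ∘τ` on `V` (the restriction of `δ` to `V`). -/
def dV (δ : ∀ i, W i →ₗ[R] W (i+1)) (h : ∀ i, W i →ₗ[R] W (i-1)) (i : ℤ) :
    Vfam δ h i →ₗ[R] Vfam δ h (i+1) :=
  (sigV δ h (i+1)).comp ((δ i).comp (tauV δ h i))

/-- The inclusion `T : Hom(V, V') → Hom(W, W')`, `(T g)ⁱ = τ'^{i+n} ∘ gⁱ ∘ σⁱ`. -/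
def homT (δ : ∀ i, W i →ₗ[R] W (i+1)) (h : ∀ i, W i →ₗ[R] W (i-1))
    (δ' : ∀ i, W' i →ₗ[R] W' (i+1)) (h' : ∀ i, W' i →ₗ[R] W' (i-1)) {n : ℤ}
    (g : ∀ i, Vfam δ h i →ₗ[R] Vfam δ' h' (i+n)) : ∀ i, W i →ₗ[R] W' (i+n) := fun i =>
  (tauV δ' h' (i+n)).comp ((g i).comp (sigV δ h i))

/-- The projection `Σ : Hom(W, W') → Hom(V, V')`, `(Σ f)ⁱ = σ'^{i+n} ∘ fⁱ ∘ τⁱ`. -/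
def homSigma (δ : ∀ i, W i →ₗ[R] W (i+1)) (h : ∀ i, W i →ₗ[R] W (i-1))
    (δ' : ∀ i, W' i →ₗ[R] W' (i+1)) (h' : ∀ i, W' i →ₗ[R] W' (i-1)) {n : ℤ}
    (f : ∀ i, W i →ₗ[R] W' (i+n)) : ∀ i, Vfam δ h i →ₗ[R] Vfam δ' h' (i+n) := fun i =>
  (sigV δ' h' (i+n)).comp ((f i).comp (tauV δ h i))

/- The next lemmas move transports to the outside and merge them. -/

lemma lcast_self {a : ℤ} (x : W a) (e : a = a) : lcast (R := R) (W := W) e x = x := rfl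

lemma lcast_lcast {a b c : ℤ} (e : a = b) (e' : b = c) (x : W a) :
    lcast (R := R) (W := W) e' (lcast (R := R) (W := W) e x)
      = lcast (R := R) (W := W) (e.trans e') x := by
  subst e; subst e'; rfl

lemma map_lcast_add {n : ℤ} (f : ∀ i, W i →ₗ[R] W' (i+n)) {a b : ℤ} (e : a = b) (x : W a) :
    f b (lcast (R := R) (W := W) e x)
      = lcast (R := R) (W := W') (congrArg (· + n) e) (f a x) := by
  subst e; rfl

lemma map_lcast_sub {n : ℤ} (f : ∀ i, W i →ₗ[R] W' (i-n)) {a b : ℤ} (e : a = b) (x : W a) :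
    f b (lcast (R := R) (W := W) e x)
      = lcast (R := R) (W := W') (congrArg (· - n) e) (f a x) := by
  subst e; rfl

lemma coe_lcast (p : ∀ i, Submodule R (W i)) {a b : ℤ} (e : a = b) (x : p a) :
    ((lcast (R := R) (W := fun i => p i) e x : p b) : W b)
      = lcast (R := R) (W := W) e (x : W a) := by
  subst e; rfl

lemma homCast_apply {n m : ℤ} (e : n = m) (f : ∀ i, W i →ₗ[R] W' (i+n)) (i : ℤ) (x : W i) :
    homCast e f i x = lcast (R := R) (W := W') (congrArg (i + ·) e) (f i x) := by
  subst e; rfl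

section Projection

variable (δ : ∀ i, W i →ₗ[R] W (i+1)) (h : ∀ i, W i →ₗ[R] W (i-1))

lemma proj_apply (m : ℤ) (x : W m) :
    proj δ h m x = x - lcast (R := R) (W := W) (by omega) (δ (m-1) (h m x))
      - lcast (R := R) (W := W) (by omega) (h (m+1) (δ m x)) := rfl

lemma coe_sigV (i : ℤ) (x : W i) : (sigV δ h i x : W i) = proj δ h i x := rfl

lemma tauV_apply (i : ℤ) (x : Vfam δ h i) : tauV δ h i x = (x : W i) := rfl

lemma coe_dV (i : ℤ) (x : Vfam δ h i) :
    (dV δ h i x : W (i+1)) = proj δ h (i+1) (δ i (x : W i)) := rfl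

variable {δ h}

/-- The hypothesis `hδh = h` with its transport moved to the outside. -/
lemma h_δ_h (hhδh : ∀ i, (h i).comp
      ((lcast (show i-1+1 = i by omega)).comp ((δ (i-1)).comp (h i))) = h i)
    (i : ℤ) (x : W i) :
    h (i-1+1) (δ (i-1) (h i x)) = lcast (R := R) (W := W) (by omega) (h i x) := by
  have := LinearMap.congr_fun (hhδh i) x
  simp only [LinearMap.comp_apply, map_lcast_sub h] at this
  conv_rhs => rw [← this, lcast_lcast, lcast_self]

lemma proj_δ (hδδ : ∀ i, (δ (i+1)).comp (δ i) = 0) (i : ℤ) (x : W i) :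
    proj δ h (i+1) (δ i x) = δ i (proj δ h i x) := by
  have hd : ∀ i x, δ (i+1) (δ i x) = 0 := fun i x => LinearMap.congr_fun (hδδ i) x
  simp only [proj_apply, map_sub, map_lcast_add δ, hd, map_zero, sub_zero]

lemma proj_h (hhh : ∀ i, (h (i-1)).comp (h i) = 0)
    (hhδh : ∀ i, (h i).comp
      ((lcast (show i-1+1 = i by omega)).comp ((δ (i-1)).comp (h i))) = h i)
    (i : ℤ) (x : W i) : proj δ h (i-1) (h i x) = 0 := by
  have hh : ∀ i x, h (i-1) (h i x) = 0 := fun i x => LinearMap.congr_fun (hhh i) x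
  simp only [proj_apply, lcast_lcast, hh, map_zero, sub_zero, h_δ_h hhδh, lcast_self, sub_self]

lemma h_proj (hhh : ∀ i, (h (i-1)).comp (h i) = 0)
    (hhδh : ∀ i, (h i).comp
      ((lcast (show i-1+1 = i by omega)).comp ((δ (i-1)).comp (h i))) = h i)
    (i : ℤ) (x : W i) : h i (proj δ h i x) = 0 := by
  have hh : ∀ i x, h (i-1) (h i x) = 0 := fun i x => LinearMap.congr_fun (hhh i) x
  simp only [proj_apply, map_sub, map_lcast_sub h, lcast_lcast, hh, map_zero, h_δ_h hhδh,
    lcast_self, sub_self]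

lemma proj_proj (hδδ : ∀ i, (δ (i+1)).comp (δ i) = 0)
    (hhh : ∀ i, (h (i-1)).comp (h i) = 0)
    (hhδh : ∀ i, (h i).comp
      ((lcast (show i-1+1 = i by omega)).comp ((δ (i-1)).comp (h i))) = h i)
    (i : ℤ) (x : W i) : proj δ h i (proj δ h i x) = proj δ h i x := by
  rw [proj_apply δ h i (proj δ h i x), h_proj hhh hhδh, ← proj_δ hδδ, h_proj hhh hhδh]
  simp

lemma proj_coe (hδδ : ∀ i, (δ (i+1)).comp (δ i) = 0)
    (hhh : ∀ i, (h (i-1)).comp (h i) = 0)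
    (hhδh : ∀ i, (h i).comp
      ((lcast (show i-1+1 = i by omega)).comp ((δ (i-1)).comp (h i))) = h i)
    (i : ℤ) (x : Vfam δ h i) : proj δ h i (x : W i) = x := by
  obtain ⟨_, y, rfl⟩ := x
  exact proj_proj hδδ hhh hhδh i y

lemma h_coe (hhh : ∀ i, (h (i-1)).comp (h i) = 0)
    (hhδh : ∀ i, (h i).comp
      ((lcast (show i-1+1 = i by omega)).comp ((δ (i-1)).comp (h i))) = h i)
    (i : ℤ) (x : Vfam δ h i) : h i (x : W i) = 0 := by
  obtain ⟨_, y, rfl⟩ := x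
  exact h_proj hhh hhδh i y

/-- The inclusion `τ` is a cochain map, i.e. `V` is `δ`-invariant. -/
lemma δ_tauV (hδδ : ∀ i, (δ (i+1)).comp (δ i) = 0)
    (hhh : ∀ i, (h (i-1)).comp (h i) = 0)
    (hhδh : ∀ i, (h i).comp
      ((lcast (show i-1+1 = i by omega)).comp ((δ (i-1)).comp (h i))) = h i) (i : ℤ) :
    (δ i).comp (tauV δ h i) = (tauV δ h (i+1)).comp (dV δ h i) := by
  ext x
  simp only [LinearMap.comp_apply, tauV_apply, coe_dV, proj_δ hδδ, proj_coe hδδ hhh hhδh]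

/-- `σ ∘ τ = id`. -/
lemma sigV_coe (hδδ : ∀ i, (δ (i+1)).comp (δ i) = 0)
    (hhh : ∀ i, (h (i-1)).comp (h i) = 0)
    (hhδh : ∀ i, (h i).comp
      ((lcast (show i-1+1 = i by omega)).comp ((δ (i-1)).comp (h i))) = h i)
    (i : ℤ) (x : Vfam δ h i) : sigV δ h i (x : W i) = x :=
  Subtype.ext (proj_coe hδδ hhh hhδh i x)

/-- The corestriction `σ` is a cochain map. -/
lemma dV_sigV (hδδ : ∀ i, (δ (i+1)).comp (δ i) = 0)
    (hhh : ∀ i, (h (i-1)).comp (h i) = 0)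
    (hhδh : ∀ i, (h i).comp
      ((lcast (show i-1+1 = i by omega)).comp ((δ (i-1)).comp (h i))) = h i)
    (i : ℤ) (x : W i) : dV δ h i (sigV δ h i x) = sigV δ h (i+1) (δ i x) := by
  apply Subtype.ext
  simp only [coe_dV, coe_sigV, proj_δ hδδ, proj_proj hδδ hhh hhδh]

lemma sigV_h (hhh : ∀ i, (h (i-1)).comp (h i) = 0)
    (hhδh : ∀ i, (h i).comp
      ((lcast (show i-1+1 = i by omega)).comp ((δ (i-1)).comp (h i))) = h i)
    (i : ℤ) (x : W i) : sigV δ h (i-1) (h i x) = 0 :=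
  Subtype.ext (proj_h hhh hhδh i x)

lemma proj_lcast {a b : ℤ} (e : a = b) (x : W a) :
    proj δ h b (lcast (R := R) (W := W) e x) = lcast (R := R) (W := W) e (proj δ h a x) := by
  subst e; rfl

end Projection

lemma negOnePow_succ_coe (n : ℤ) :
    (((-1 : ℤˣ) ^ (n+1) : ℤˣ) : ℤ) = -(((-1 : ℤˣ) ^ n : ℤˣ) : ℤ) := by
  rw [zpow_add]; simp

lemma negOnePow_pred_coe (n : ℤ) :
    (((-1 : ℤˣ) ^ (n-1) : ℤˣ) : ℤ) = -(((-1 : ℤˣ) ^ n : ℤˣ) : ℤ) := by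
  rw [zpow_sub]; simp

lemma homD_apply (δ : ∀ i, W i →ₗ[R] W (i+1)) (δ' : ∀ i, W' i →ₗ[R] W' (i+1)) {n : ℤ}
    (f : ∀ i, W i →ₗ[R] W' (i+n)) (i : ℤ) (x : W i) :
    homD δ δ' f i x = lcast (R := R) (W := W') (by omega) (δ' (i+n) (f i x))
      - (((-1 : ℤˣ) ^ n : ℤˣ) : ℤ) •
        lcast (R := R) (W := W') (by omega) (f (i+1) (δ i x)) := rfl

lemma homH_apply (δ' : ∀ i, W' i →ₗ[R] W' (i+1)) (h' : ∀ i, W' i →ₗ[R] W' (i-1))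
    (h : ∀ i, W i →ₗ[R] W (i-1)) {n : ℤ}
    (f : ∀ i, W i →ₗ[R] W' (i+n)) (i : ℤ) (x : W i) :
    homH δ' h' h f i x = lcast (R := R) (W := W') (by omega) (h' (i+n) (f i x))
      + (((-1 : ℤˣ) ^ n : ℤˣ) : ℤ) •
        lcast (R := R) (W := W') (by omega) (proj δ' h' (i-1+n) (f (i-1) (h i x))) := rfl

lemma homT_apply (δ : ∀ i, W i →ₗ[R] W (i+1)) (h : ∀ i, W i →ₗ[R] W (i-1))
    (δ' : ∀ i, W' i →ₗ[R] W' (i+1)) (h' : ∀ i, W' i →ₗ[R] W' (i-1)) {n : ℤ}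
    (g : ∀ i, Vfam δ h i →ₗ[R] Vfam δ' h' (i+n)) (i : ℤ) (x : W i) :
    homT δ h δ' h' g i x = (g i (sigV δ h i x) : W' (i+n)) := rfl

lemma homSigma_apply (δ : ∀ i, W i →ₗ[R] W (i+1)) (h : ∀ i, W i →ₗ[R] W (i-1))
    (δ' : ∀ i, W' i →ₗ[R] W' (i+1)) (h' : ∀ i, W' i →ₗ[R] W' (i-1)) {n : ℤ}
    (f : ∀ i, W i →ₗ[R] W' (i+n)) (i : ℤ) (x : Vfam δ h i) :
    homSigma δ h δ' h' f i x = sigV δ' h' (i+n) (f i (x : W i)) := rfl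

/-- Hom-space contraction data: for cochain complexes `(W, δ, h)` and
`(W', δ', h')` with contraction homotopies, `V := range ϖ` is `δ`-invariant with induced
differential `d`, and `(Hom(V, V'), D̃)` together with `T`, `Σ`, `H` is a contraction data
for `(Hom(W, W'), D)`: `Σ∘T = id`, `T` and `Σ` are cochain maps,
`id − T∘Σ = D∘H + H∘D`, `Σ∘H = 0`, `H∘T = 0`. -/
theorem hom_space_contraction_data
    (δ : ∀ i, W i →ₗ[R] W (i+1)) (h : ∀ i, W i →ₗ[R] W (i-1))
    (δ' : ∀ i, W' i →ₗ[R] W' (i+1)) (h' : ∀ i, W' i →ₗ[R] W' (i-1))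
    (hδδ : ∀ i, (δ (i+1)).comp (δ i) = 0)
    (hhh : ∀ i, (h (i-1)).comp (h i) = 0)
    (hhδh : ∀ i, (h i).comp
      ((lcast (show i-1+1 = i by omega)).comp ((δ (i-1)).comp (h i))) = h i)
    (hδδ' : ∀ i, (δ' (i+1)).comp (δ' i) = 0)
    (hhh' : ∀ i, (h' (i-1)).comp (h' i) = 0)
    (hhδh' : ∀ i, (h' i).comp
      ((lcast (show i-1+1 = i by omega)).comp ((δ' (i-1)).comp (h' i))) = h' i) :
    (∀ i, (δ i).comp (tauV δ h i) = (tauV δ h (i+1)).comp (dV δ h i)) ∧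
    (∀ i, (δ' i).comp (tauV δ' h' i) = (tauV δ' h' (i+1)).comp (dV δ' h' i)) ∧
    ∀ (n : ℤ),
      (∀ (g : ∀ i, Vfam δ h i →ₗ[R] Vfam δ' h' (i+n)),
        homSigma δ h δ' h' (homT δ h δ' h' g) = g ∧
        homD δ δ' (homT δ h δ' h' g) = homT δ h δ' h' (homD (dV δ h) (dV δ' h') g) ∧
        homH δ' h' h (homT δ h δ' h' g) = 0) ∧
      (∀ (f : ∀ i, W i →ₗ[R] W' (i+n)),
        homD (dV δ h) (dV δ' h') (homSigma δ h δ' h' f) =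
          homSigma δ h δ' h' (homD δ δ' f) ∧
        (fun i => f i - homT δ h δ' h' (homSigma δ h δ' h' f) i) =
          (fun i => homCast (show n-1+1 = n by omega) (homD δ δ' (homH δ' h' h f)) i
            + homCast (show n+1-1 = n by omega) (homH δ' h' h (homD δ δ' f)) i) ∧
        homSigma δ h δ' h' (homH δ' h' h f) = 0) := by
  refine ⟨δ_tauV hδδ hhh hhδh, δ_tauV hδδ' hhh' hhδh', fun n => ⟨fun g => ⟨?_, ?_, ?_⟩,
    fun f => ⟨?_, ?_, ?_⟩⟩⟩
  · funext i
    ext1 x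
    simp only [homSigma_apply, homT_apply, sigV_coe hδδ hhh hhδh, sigV_coe hδδ' hhh' hhδh']
  · funext i
    ext1 x
    simp only [homD_apply, homT_apply, dV_sigV hδδ hhh hhδh, Submodule.coe_sub,
      AddSubgroupClass.coe_zsmul, coe_lcast (Vfam δ' h'), coe_dV, proj_δ hδδ', proj_coe hδδ' hhh' hhδh']
  · funext i
    ext1 x
    simp only [homH_apply, homT_apply, h_coe hhh' hhδh', sigV_h hhh hhδh, map_zero,
      ZeroMemClass.coe_zero, smul_zero, add_zero, Pi.zero_apply, LinearMap.zero_apply]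
  · funext i
    ext1 x
    apply Subtype.ext
    have hx : (dV δ h i x : W (i+1)) = δ i (x : W i) := by
      rw [coe_dV, proj_δ hδδ, proj_coe hδδ hhh hhδh]
    simp only [homD_apply, homSigma_apply, dV_sigV hδδ' hhh' hhδh', Submodule.coe_sub,
      AddSubgroupClass.coe_zsmul, coe_lcast (Vfam δ' h'), coe_sigV, map_sub, map_zsmul, proj_lcast, hx]
  · funext i
    ext1 x
    -- `ϖ'` must stay folded in the terms `ϖ' f δ h`, `ϖ' f h δ` and `δ' ϖ' f h`, so `proj` is
    -- unfolded only in the argument `ϖ x` (here) and in `ϖ' f x` (at the end).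
    have key : proj δ' h' (i+n) (f i (proj δ h i x)) = proj δ' h' (i+n) (f i x)
        - lcast (R := R) (W := W') (by omega) (proj δ' h' (i-1+1+n) (f (i-1+1) (δ (i-1) (h i x))))
        - lcast (R := R) (W := W') (by omega)
            (proj δ' h' (i+1-1+n) (f (i+1-1) (h (i+1) (δ i x)))) := by
      rw [proj_apply δ h]
      simp only [map_sub, map_lcast_add f, proj_lcast]
    have hs : ∀ {m : ℤ} (y : W' m),
        (((-1 : ℤˣ) ^ n : ℤˣ) : ℤ) • (((-1 : ℤˣ) ^ n : ℤˣ) : ℤ) • y = y := fun y => by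
      rw [smul_smul, Int.units_coe_mul_self, one_smul]
    simp only [LinearMap.sub_apply, LinearMap.add_apply, homCast_apply, homT_apply, homSigma_apply,
      homD_apply, homH_apply, coe_sigV, key, negOnePow_succ_coe, negOnePow_pred_coe,
      map_sub, map_add, map_neg, map_zsmul, map_lcast_add δ', map_lcast_sub h', proj_lcast, lcast_lcast,
      proj_δ hδδ', neg_smul, smul_add, smul_sub, hs]
    rw [proj_apply δ' h' (i+n) (f i x)]
    abel
  · funext i
    ext1 x
    apply Subtype.ext
    simp only [homSigma_apply, homH_apply, coe_sigV, proj_lcast,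
      proj_h hhh' hhδh', h_coe hhh hhδh, map_zero, smul_zero, add_zero, Pi.zero_apply,
      LinearMap.zero_apply, ZeroMemClass.coe_zero]

end HomContractionData
end

section
/- (The contraction computing Atiyah cocycles: the (2,1) Hom-tensor case.) Let (W, δ, h) be a cochain complex of R-modules with a contraction homotopy, and set ϖ := id − δ∘h − h∘δ (componentwise). Consider the complex Hom(W ⊗ W, W) whose n-cochains are families Θ = (Θ^{i,j} : Wⁱ ⊗_R Wʲ → W^{i+j+n}), with differential D(Θ) = δ∘Θ − (−1)ⁿ Θ∘D_⊗, where D_⊗ is the tensor-product differential D_⊗(x⊗y) = δ(x)⊗y + (−1)ⁱ x⊗δ(y) for x ∈ Wⁱ. Define the operator H on n-cochains by H(Θ) = h∘Θ + (−1)ⁿ ϖ∘Θ∘(h⊗id + ϖ⊗h), where the Koszul sign convention gives (h⊗id)(x⊗y) = h(x)⊗y and (ϖ⊗h)(x⊗y) = (−1)ⁱ ϖ(x)⊗h(y) for x ∈ Wⁱ. Then D∘D = 0, H∘H = 0, and H∘D∘H = H; that is, (Hom(W⊗W, W), D, H) is a contraction. -/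
/-! The operators are transported to the total space `V = ⨁ i, W i`. There `δ` and `h` become
endomorphisms, a cochain `Θ` becomes a bilinear map `V → V → V`, the transports between equal
degrees disappear, and the Koszul signs are carried by the sign operator `ε = (-1)^i` on `W i`.

Write `K = h ⊗ id + ϖ ⊗ h`, `s = (-1)^n`, and `B` for the bilinear map of a degree-`n` cochain. The
side conditions on `h` give `hϖ = ϖh = 0`, `ϖδ = δϖ` and `ϖϖ = ϖ`, whence `K K = 0` and
`K D_⊗ K = K`. Then `H H = 0` follows from `hh = hϖ = ϖh = 0` and `K K = 0`. With `Ψ = H B`, one has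
`hΨ = 0`, `hδΨ = hB` and `ϖΨ = s ϖBK`, so `ϖδΨK = δϖΨK = 0` and
`H D Ψ = hδΨ + ϖΨ D_⊗ K = hB + s ϖB(K D_⊗ K) = H B`.

Since `Θ` is recovered from its bilinear map on `V`, the identities descend to cochains. -/

open scoped TensorProduct

section HomTensorContraction

variable {R : Type*} [CommRing R]

variable {W : ℤ → Type*} [∀ i, AddCommGroup (W i)] [∀ i, Module R (W i)]

/-- The differential on `Hom(W ⊗ W, W)`:
`D(Θ) = δ∘Θ − (−1)ⁿ Θ∘D_⊗`, where
`D_⊗(x ⊗ y) = δ(x) ⊗ y + (−1)ⁱ x ⊗ δ(y)` for `x ∈ Wⁱ`. -/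
noncomputable def homTensD (δ : ∀ i, W i →ₗ[R] W (i+1)) {n : ℤ}
    (Θ : ∀ i j, W i ⊗[R] W j →ₗ[R] W (i+j+n)) :
    ∀ i j, W i ⊗[R] W j →ₗ[R] W (i+j+(n+1)) := fun i j =>
  (lcast (show i+j+n+1 = i+j+(n+1) by omega)).comp ((δ (i+j+n)).comp (Θ i j))
    - (((-1 : ℤˣ) ^ n : ℤˣ) : ℤ) •
      ( (lcast (show i+1+j+n = i+j+(n+1) by omega)).comp
          ((Θ (i+1) j).comp (TensorProduct.map (δ i) LinearMap.id))
        + (((-1 : ℤˣ) ^ i : ℤˣ) : ℤ) •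
          ((lcast (show i+(j+1)+n = i+j+(n+1) by omega)).comp
            ((Θ i (j+1)).comp (TensorProduct.map LinearMap.id (δ j)))) )

/-- The homotopy on `Hom(W ⊗ W, W)`:
`H(Θ) = h∘Θ + (−1)ⁿ ϖ∘Θ∘(h⊗id + ϖ⊗h)`, where
`(h⊗id)(x ⊗ y) = h(x) ⊗ y` and `(ϖ⊗h)(x ⊗ y) = (−1)ⁱ ϖ(x) ⊗ h(y)` for `x ∈ Wⁱ`. -/
noncomputable def homTensH (δ : ∀ i, W i →ₗ[R] W (i+1)) (h : ∀ i, W i →ₗ[R] W (i-1))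
    {n : ℤ} (Θ : ∀ i j, W i ⊗[R] W j →ₗ[R] W (i+j+n)) :
    ∀ i j, W i ⊗[R] W j →ₗ[R] W (i+j+(n-1)) := fun i j =>
  (lcast (show i+j+n-1 = i+j+(n-1) by omega)).comp ((h (i+j+n)).comp (Θ i j))
    + (((-1 : ℤˣ) ^ n : ℤˣ) : ℤ) •
      ( (lcast (show i-1+j+n = i+j+(n-1) by omega)).comp
          ((proj δ h (i-1+j+n)).comp
            ((Θ (i-1) j).comp (TensorProduct.map (h i) LinearMap.id)))
        + (((-1 : ℤˣ) ^ i : ℤˣ) : ℤ) •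
          ((lcast (show i+(j-1)+n = i+j+(n-1) by omega)).comp
            ((proj δ h (i+(j-1)+n)).comp
              ((Θ i (j-1)).comp (TensorProduct.map (proj δ h i) (h j))))) )

/-- Recast a degree-`n` cochain of `Hom(W ⊗ W, W)` along an equality `n = m`. -/
def homTensCast {n m : ℤ} (hnm : n = m) (Θ : ∀ i j, W i ⊗[R] W j →ₗ[R] W (i+j+n)) :
    ∀ i j, W i ⊗[R] W j →ₗ[R] W (i+j+m) := by
  subst hnm; exact Θ

namespace HomTens

section Total

variable {V : Type*} [AddCommGroup V] [Module R V]

/-- The relations satisfied on the total space by the differential `d`, the homotopy `h`, the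
projection `p` and the sign operator `e`. -/
structure Rel (d h p e : V →ₗ[R] V) : Prop where
  dd : ∀ a, d (d a) = 0
  hh : ∀ a, h (h a) = 0
  hdh : ∀ a, h (d (h a)) = h a
  p_def : ∀ a, p a = a - d (h a) - h (d a)
  ee : ∀ a, e (e a) = a
  ed : ∀ a, e (d a) = - d (e a)
  eh : ∀ a, e (h a) = - h (e a)

variable {d h p e : V →ₗ[R] V}

theorem Rel.hp (r : Rel d h p e) (a : V) : h (p a) = 0 := by
  simp [r.p_def, r.hh, r.hdh]

theorem Rel.ph (r : Rel d h p e) (a : V) : p (h a) = 0 := by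
  simp [r.p_def, r.hh, r.hdh]

theorem Rel.pd (r : Rel d h p e) (a : V) : p (d a) = d (p a) := by
  simp [r.p_def, r.dd]

theorem Rel.hdp (r : Rel d h p e) (a : V) : h (d (p a)) = 0 := by
  rw [← r.pd, r.hp]

theorem Rel.pp (r : Rel d h p e) (a : V) : p (p a) = p a := by
  rw [r.p_def (p a), r.hp, r.hdp, map_zero, sub_zero, sub_zero]

theorem Rel.ep (r : Rel d h p e) (a : V) : e (p a) = p (e a) := by
  simp [r.p_def, r.ed, r.eh]

/-- The differential on the bilinear map of a cochain of degree `n`, with `s = (-1)^n`;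
the Koszul sign `(-1)^i` enters through `e` acting on the first argument. -/
def totD (d e : V →ₗ[R] V) (s : ℤ) (B : V →ₗ[R] V →ₗ[R] V) : V →ₗ[R] V →ₗ[R] V :=
  B.compr₂ d - s • (B.comp d + (B.comp e).compl₂ d)

/-- The homotopy on the bilinear map of a cochain of degree `n`, with `s = (-1)^n`;
the Koszul sign `(-1)^i` enters through `e` acting on the first argument. -/
def totH (h p e : V →ₗ[R] V) (s : ℤ) (B : V →ₗ[R] V →ₗ[R] V) : V →ₗ[R] V →ₗ[R] V :=
  B.compr₂ h + s • (B.comp h + (B.comp (p.comp e)).compl₂ h).compr₂ p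

theorem totD_apply (s : ℤ) (B : V →ₗ[R] V →ₗ[R] V) (a b : V) :
    totD d e s B a b = d (B a b) - s • (B (d a) b + B (e a) (d b)) := rfl

theorem totH_apply (s : ℤ) (B : V →ₗ[R] V →ₗ[R] V) (a b : V) :
    totH h p e s B a b = h (B a b) + s • p (B (h a) b + B (p (e a)) (h b)) := rfl

theorem totD_totD (r : Rel d h p e) (s : ℤ) (B : V →ₗ[R] V →ₗ[R] V) :
    totD d e (-s) (totD d e s B) = 0 := by
  ext a b
  simp only [totD_apply, r.dd, r.ee, r.ed, map_sub, map_add, map_neg, map_zsmul, map_zero,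
    LinearMap.neg_apply, LinearMap.zero_apply]
  module

theorem totH_totH (r : Rel d h p e) (s : ℤ) (B : V →ₗ[R] V →ₗ[R] V) :
    totH h p e (-s) (totH h p e s B) = 0 := by
  ext a b
  simp only [totH_apply, r.hh, r.hp, r.ph, r.pp, r.ee, r.eh, r.ep, map_add, map_neg, map_zsmul,
    map_zero, LinearMap.neg_apply, LinearMap.zero_apply]
  module

theorem totH_totD_totH (r : Rel d h p e) {s : ℤ} (hs : s * s = 1) (B : V →ₗ[R] V →ₗ[R] V) :
    totH h p e s (totD d e (-s) (totH h p e s B)) = totH h p e s B := by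
  ext a b
  simp only [totH_apply, totD_apply, r.hh, r.hp, r.ph, r.pp, r.pd, r.ee, r.eh, r.ed, r.ep, r.hdh,
    r.hdp, map_add, map_sub, map_neg, map_zsmul, map_zero, LinearMap.neg_apply,
    LinearMap.zero_apply]
  match_scalars <;> grind

end Total

open DirectSum

/-- The endomorphism of `⨁ i, W i` assembled from maps `W i → W (c i)`. -/
noncomputable def tot {c : ℤ → ℤ} (f : ∀ i, W i →ₗ[R] W (c i)) : (⨁ i, W i) →ₗ[R] ⨁ i, W i :=
  DirectSum.toModule R ℤ _ fun i => (DirectSum.lof R ℤ W (c i)).comp (f i)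

/-- The sign operator: `(-1)^i` on `W i`. -/
noncomputable def sgn : (⨁ i, W i) →ₗ[R] ⨁ i, W i :=
  tot (c := id) fun i => (((-1 : ℤˣ) ^ i : ℤˣ) : ℤ) • LinearMap.id

/-- The bilinear map on `⨁ i, W i` assembled from a cochain of `Hom(W ⊗ W, W)`. -/
noncomputable def glob {n : ℤ} (Θ : ∀ i j, W i ⊗[R] W j →ₗ[R] W (i+j+n)) :
    (⨁ i, W i) →ₗ[R] (⨁ i, W i) →ₗ[R] ⨁ i, W i :=
  DirectSum.toModule R ℤ _ fun i => LinearMap.flip <| DirectSum.toModule R ℤ _ fun j =>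
    LinearMap.flip <| TensorProduct.curry <| (DirectSum.lof R ℤ W (i+j+n)).comp (Θ i j)

theorem tot_lof {c : ℤ → ℤ} (f : ∀ i, W i →ₗ[R] W (c i)) (i : ℤ) (x : W i) :
    tot f (lof R ℤ W i x) = lof R ℤ W (c i) (f i x) := by
  simp [tot]

theorem sgn_lof (i : ℤ) (x : W i) :
    sgn (R := R) (W := W) (lof R ℤ W i x) = (((-1 : ℤˣ) ^ i : ℤˣ) : ℤ) • lof R ℤ W i x := by
  simp only [sgn, tot_lof, LinearMap.smul_apply, map_zsmul]; rfl

theorem glob_lof {n : ℤ} (Θ : ∀ i j, W i ⊗[R] W j →ₗ[R] W (i+j+n)) (i j : ℤ) (x : W i) (y : W j) :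
    glob Θ (lof R ℤ W i x) (lof R ℤ W j y) = lof R ℤ W (i+j+n) (Θ i j (x ⊗ₜ y)) := by
  simp [glob]

/-- Transports between equal degrees are invisible in the total space. -/
theorem lof_lcast {a b : ℤ} (hab : a = b) (x : W a) :
    lof R ℤ W b (lcast (R := R) hab x) = lof R ℤ W a x := by
  subst hab; rfl

theorem lof_inj {i : ℤ} {x y : W i} (hxy : lof R ℤ W i x = lof R ℤ W i y) : x = y :=
  DirectSum.of_injective (β := W) i hxy

theorem glob_inj {n : ℤ} {Θ Θ' : ∀ i j, W i ⊗[R] W j →ₗ[R] W (i+j+n)}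
    (hg : glob Θ = glob Θ') : Θ = Θ' := by
  funext i j
  refine TensorProduct.ext' fun x y => lof_inj (R := R) ?_
  simpa only [glob_lof] using
    congrArg (fun B => B (lof R ℤ W i x) (lof R ℤ W j y)) hg

theorem glob_zero {n : ℤ} : glob (0 : ∀ i j, W i ⊗[R] W j →ₗ[R] W (i+j+n)) = 0 := by
  ext i x j y : 4
  simp [glob_lof]

theorem glob_cast {n m : ℤ} (hnm : n = m) (Θ : ∀ i j, W i ⊗[R] W j →ₗ[R] W (i+j+n)) :
    glob (homTensCast hnm Θ) = glob Θ := by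
  subst hnm; rfl

theorem sign_succ (n : ℤ) : (((-1 : ℤˣ) ^ (n+1) : ℤˣ) : ℤ) = - (((-1 : ℤˣ) ^ n : ℤˣ) : ℤ) := by
  simp [zpow_add]

theorem sign_pred (n : ℤ) : (((-1 : ℤˣ) ^ (n-1) : ℤˣ) : ℤ) = - (((-1 : ℤˣ) ^ n : ℤˣ) : ℤ) := by
  simp [zpow_sub]

theorem sign_sq (n : ℤ) :
    (((-1 : ℤˣ) ^ n : ℤˣ) : ℤ) * (((-1 : ℤˣ) ^ n : ℤˣ) : ℤ) = 1 := by
  rw [← Units.val_mul, Int.units_mul_self, Units.val_one]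

theorem glob_D (δ : ∀ i, W i →ₗ[R] W (i+1)) {n : ℤ}
    (Θ : ∀ i j, W i ⊗[R] W j →ₗ[R] W (i+j+n)) :
    glob (homTensD δ Θ) = totD (tot δ) sgn (((-1 : ℤˣ) ^ n : ℤˣ) : ℤ) (glob Θ) := by
  ext i x j y : 4
  simp [totD_apply, glob_lof, tot_lof, sgn_lof, homTensD, lof_lcast, map_sub, map_add, map_zsmul]

theorem tot_proj_lof (δ : ∀ i, W i →ₗ[R] W (i+1)) (h : ∀ i, W i →ₗ[R] W (i-1)) (i : ℤ) (x : W i) :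
    tot (c := id) (proj δ h) (lof R ℤ W i x) = lof R ℤ W i (proj δ h i x) :=
  tot_lof (c := id) _ i x

theorem glob_H (δ : ∀ i, W i →ₗ[R] W (i+1)) (h : ∀ i, W i →ₗ[R] W (i-1)) {n : ℤ}
    (Θ : ∀ i j, W i ⊗[R] W j →ₗ[R] W (i+j+n)) :
    glob (homTensH δ h Θ) =
      totH (tot h) (tot (c := id) (proj δ h)) sgn (((-1 : ℤˣ) ^ n : ℤˣ) : ℤ) (glob Θ) := by
  ext i x j y : 4
  simp [totH_apply, glob_lof, tot_lof h, tot_proj_lof, sgn_lof, homTensH, lof_lcast, map_add,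
    map_zsmul]

/-- The componentwise hypotheses on `δ` and `h` give the operator relations on the total space. -/
theorem rel_tot (δ : ∀ i, W i →ₗ[R] W (i+1)) (h : ∀ i, W i →ₗ[R] W (i-1))
    (hδδ : ∀ i, (δ (i+1)).comp (δ i) = 0)
    (hhh : ∀ i, (h (i-1)).comp (h i) = 0)
    (hhδh : ∀ i, (h i).comp
      ((lcast (show i-1+1 = i by omega)).comp ((δ (i-1)).comp (h i))) = h i) :
    Rel (tot δ) (tot h) (tot (c := id) (proj δ h)) sgn where
  dd := LinearMap.congr_fun (f := tot δ ∘ₗ tot δ) (g := 0) <| by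
    ext i x : 2
    have := congrArg (lof R ℤ W _) (LinearMap.congr_fun (hδδ i) x)
    simpa [tot_lof] using this
  hh := LinearMap.congr_fun (f := tot h ∘ₗ tot h) (g := 0) <| by
    ext i x : 2
    have := congrArg (lof R ℤ W _) (LinearMap.congr_fun (hhh i) x)
    simpa [tot_lof] using this
  hdh := LinearMap.congr_fun (f := tot h ∘ₗ tot δ ∘ₗ tot h) (g := tot h) <| by
    ext i x : 2
    have := LinearMap.congr_fun (hhδh i) x
    simp only [LinearMap.comp_apply] at this ⊢
    rw [tot_lof h, tot_lof δ, ← lof_lcast (show i-1+1 = i by omega), tot_lof h, this]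
  p_def := LinearMap.congr_fun (f := tot (c := id) (proj δ h))
      (g := LinearMap.id - tot δ ∘ₗ tot h - tot h ∘ₗ tot δ) <| by
    ext i x : 2
    simp [tot_proj_lof, tot_lof δ, tot_lof h, proj, lof_lcast]
  ee := LinearMap.congr_fun (f := sgn ∘ₗ sgn) (g := LinearMap.id) <| by
    ext i x : 2
    simp only [LinearMap.comp_apply, sgn_lof, map_zsmul, smul_smul, sign_sq, one_smul,
      LinearMap.id_apply]
  ed := LinearMap.congr_fun (f := sgn ∘ₗ tot δ) (g := - (tot δ ∘ₗ sgn)) <| by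
    ext i x : 2
    simp only [LinearMap.comp_apply, LinearMap.neg_apply, sgn_lof, tot_lof, map_zsmul, sign_succ,
      neg_smul]
  eh := LinearMap.congr_fun (f := sgn ∘ₗ tot h) (g := - (tot h ∘ₗ sgn)) <| by
    ext i x : 2
    simp only [LinearMap.comp_apply, LinearMap.neg_apply, sgn_lof, tot_lof, map_zsmul, sign_pred,
      neg_smul]

end HomTens

/-- the contraction computing Atiyah cocycles, the `(2,1)` Hom-tensor case:
for a cochain complex `(W, δ, h)` with contraction homotopy, `(Hom(W ⊗ W, W), D, H)` is a
contraction: `D∘D = 0`, `H∘H = 0`, `H∘D∘H = H`. -/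
theorem hom_tensor_contraction
    (δ : ∀ i, W i →ₗ[R] W (i+1)) (h : ∀ i, W i →ₗ[R] W (i-1))
    (hδδ : ∀ i, (δ (i+1)).comp (δ i) = 0)
    (hhh : ∀ i, (h (i-1)).comp (h i) = 0)
    (hhδh : ∀ i, (h i).comp
      ((lcast (show i-1+1 = i by omega)).comp ((δ (i-1)).comp (h i))) = h i) :
    ∀ (n : ℤ) (Θ : ∀ i j, W i ⊗[R] W j →ₗ[R] W (i+j+n)),
      homTensD δ (homTensD δ Θ) = 0 ∧
      homTensH δ h (homTensH δ h Θ) = 0 ∧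
      homTensH δ h (homTensD δ (homTensH δ h Θ)) =
        homTensCast (show n-1 = n-1+1-1 by omega) (homTensH δ h Θ) := by
  intro n Θ
  have r := HomTens.rel_tot δ h hδδ hhh hhδh
  refine ⟨HomTens.glob_inj ?_, HomTens.glob_inj ?_, HomTens.glob_inj ?_⟩
  · rw [HomTens.glob_D, HomTens.glob_D, HomTens.sign_succ, HomTens.totD_totD r, HomTens.glob_zero]
  · rw [HomTens.glob_H, HomTens.glob_H, HomTens.sign_pred, HomTens.totH_totH r, HomTens.glob_zero]
  · rw [HomTens.glob_cast, HomTens.glob_H, HomTens.glob_D, HomTens.glob_H, HomTens.sign_succ,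
      HomTens.sign_pred, neg_neg, HomTens.totH_totD_totH r (HomTens.sign_sq n)]

end HomTensorContraction
end
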